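/- For s ∈ (3/2, 2), every γ ∈ 𝓜 and every u ∈ H^s(𝕋, ℝⁿ) satisfy ‖R^s_γ u‖²_{L²(ν_γ)} ≤ (1/s) · distor(γ)^{2s} · ( [u]²_{H^s(γ)} + ‖D_γ u‖²_{L∞} · [γ]²_{H^s(γ)} ). In particular R^s_γ is a bounded linear operator from H^s(𝕋,ℝⁿ) to L²(ν_γ). -/

import Mathlib

open MeasureTheory Real Filter Set
open scoped ENNReal Topology RealInnerProductSpace

noncomputable section

/-- Euclidean space `ℝⁿ`. -/
abbrev En (n : ℕ) : Type := EuclideanSpace ℝ (Fin n)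

/-- A fundamental domain for the circle `𝕋 = ℝ/ℤ`. -/
def I01 : Set ℝ := Set.Ico (0 : ℝ) 1

/-- The intrinsic distance on `𝕋 = ℝ/ℤ`, expressed for real representatives. -/
def dT (x y : ℝ) : ℝ := ⨅ k : ℤ, |x - y - (k : ℝ)|

/-- Supremum norm of a (periodic) function on the circle. -/
def supNorm {E : Type*} [NormedAddCommGroup E] (f : ℝ → E) : ℝ := ⨆ x : ℝ, ‖f x‖

/-- The squared Gagliardo seminorm `[v]_{H^σ}²` of a function on the circle, valued in `[0,∞]`. -/
def gagliardoSqE {E : Type*} [NormedAddCommGroup E] (σ : ℝ) (v : ℝ → E) : ℝ≥0∞ :=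
  ∫⁻ x in I01, ∫⁻ y in I01, ENNReal.ofReal (‖v y - v x‖ ^ 2 / dT x y ^ (2 * σ + 1))

/-- Membership in the Sobolev–Slobodeckij space `H^s(𝕋, ℝⁿ)`; for `s ∈ (3/2,2)` such
functions have a `C¹` representative, which we take as the defining data. -/
def InHs {n : ℕ} (s : ℝ) (u : ℝ → En n) : Prop :=
  Function.Periodic u 1 ∧ ContDiff ℝ 1 u ∧ gagliardoSqE (s - 1) (deriv u) < ⊤

/-- The squared `H^s` norm `‖u‖²_{L²} + ‖u'‖²_{L²} + [u']²_{H^{s-1}}`. -/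
def HsNormSq {n : ℕ} (s : ℝ) (u : ℝ → En n) : ℝ :=
  (∫ x in I01, ‖u x‖ ^ 2) + (∫ x in I01, ‖deriv u x‖ ^ 2) +
    (gagliardoSqE (s - 1) (deriv u)).toReal

/-- The `H^s` norm. -/
def HsNorm {n : ℕ} (s : ℝ) (u : ℝ → En n) : ℝ := Real.sqrt (HsNormSq s u)

/-- The `H^s` inner product. -/
def HsInner {n : ℕ} (s : ℝ) (u v : ℝ → En n) : ℝ :=
  (∫ x in I01, ⟪u x, v x⟫) + (∫ x in I01, ⟪deriv u x, deriv v x⟫) +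
    ∫ x in I01, ∫ y in I01,
      ⟪deriv u y - deriv u x, deriv v y - deriv v x⟫ / dT x y ^ (2 * (s - 1) + 1)

/-- The manifold `𝓜` of embedded closed curves of class `H^s`: injective (on the circle)
immersions. -/
def InM {n : ℕ} (s : ℝ) (γ : ℝ → En n) : Prop :=
  InHs s γ ∧ Set.InjOn γ I01 ∧ ∀ x, deriv γ x ≠ 0

/-- The length `L(γ)`. -/
def arcLen {n : ℕ} (γ : ℝ → En n) : ℝ := ∫ x in I01, ‖deriv γ x‖

/-- The arc-length distance `d_γ(x,y)`: the length of the shorter of the two arcs of `γ`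
between `x` and `y`. -/
def arcDist {n : ℕ} (γ : ℝ → En n) (x y : ℝ) : ℝ :=
  ⨅ k : ℤ, |∫ t in x..(y + (k : ℝ)), ‖deriv γ t‖|

/-- Derivative with respect to arc length, `D_γ u = u' / |γ'|`. -/
def Dg {n : ℕ} (γ u : ℝ → En n) (x : ℝ) : En n := ‖deriv γ x‖⁻¹ • deriv u x

/-- `𝒟_γ u (x)`, the pointwise linear map `w ↦ |γ'(x)|⁻² ⟪γ'(x), w⟫ u'(x)`. -/
def DDg {n : ℕ} (γ u : ℝ → En n) (x : ℝ) (w : En n) : En n :=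
  ((‖deriv γ x‖ ^ 2)⁻¹ * ⟪deriv γ x, w⟫) • deriv u x

/-- The operator `R^s_γ`. -/
def Rop {n : ℕ} (s : ℝ) (γ u : ℝ → En n) (x y : ℝ) : En n :=
  (‖γ y - γ x‖ ^ s)⁻¹ • (u y - u x - DDg γ u x (γ y - γ x))

/-- Density of the measure `μ_γ` with respect to `λ ⊗ λ` on `𝕋 × 𝕋`. -/
def muW {n : ℕ} (γ : ℝ → En n) (x y : ℝ) : ℝ :=
  ‖deriv γ x‖ * ‖deriv γ y‖ / ‖γ y - γ x‖

/-- Density of the measure `ν_γ` with respect to `λ ⊗ λ` on `𝕋 × 𝕋`. -/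
def nuW {n : ℕ} (γ : ℝ → En n) (x y : ℝ) : ℝ :=
  ‖deriv γ x‖ * ‖deriv γ y‖ / arcDist γ x y

/-- The tangent-point energy, valued in `[0,∞]`. -/
def EtpE {n : ℕ} (s : ℝ) (γ : ℝ → En n) : ℝ≥0∞ :=
  ∫⁻ x in I01, ∫⁻ y in I01, ENNReal.ofReal (‖Rop s γ γ x y‖ ^ 2 * muW γ x y)

/-- The tangent-point energy, real-valued (finite on `𝓜`). -/
def Etp {n : ℕ} (s : ℝ) (γ : ℝ → En n) : ℝ := (EtpE s γ).toReal

/-- `‖R^s_γ u‖²_{L²(ν_γ)}`, valued in `[0,∞]`. -/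
def RnuSqE {n : ℕ} (s : ℝ) (γ u : ℝ → En n) : ℝ≥0∞ :=
  ∫⁻ x in I01, ∫⁻ y in I01, ENNReal.ofReal (‖Rop s γ u x y‖ ^ 2 * nuW γ x y)

/-- `‖R^s_γ u‖²_{L²(ν_γ)}`, real-valued. -/
def RnuSq {n : ℕ} (s : ℝ) (γ u : ℝ → En n) : ℝ := (RnuSqE s γ u).toReal

/-- The squared `γ`-dependent seminorm `[u]²_{H^s(γ)}`, valued in `[0,∞]`. -/
def gagGammaSqE {n : ℕ} (s : ℝ) (γ u : ℝ → En n) : ℝ≥0∞ :=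
  ∫⁻ x in I01, ∫⁻ y in I01,
    ENNReal.ofReal (‖Dg γ u y - Dg γ u x‖ ^ 2 / arcDist γ x y ^ (2 * (s - 1)) * nuW γ x y)

/-- The squared `γ`-dependent seminorm `[u]²_{H^s(γ)}`, real-valued. -/
def gagGammaSq {n : ℕ} (s : ℝ) (γ u : ℝ → En n) : ℝ := (gagGammaSqE s γ u).toReal

/-- The inner product `⟨u,v⟩_{L²(γ)}`. -/
def innerL2g {n : ℕ} (γ u v : ℝ → En n) : ℝ := ∫ x in I01, ⟪u x, v x⟫ * ‖deriv γ x‖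

/-- The inner product `⟨u,v⟩_{H¹(γ)}`. -/
def innerH1g {n : ℕ} (γ u v : ℝ → En n) : ℝ :=
  ∫ x in I01, ⟪Dg γ u x, Dg γ v x⟫ * ‖deriv γ x‖

/-- The squared `γ`-dependent norm `‖u‖²_{H^s(γ)}`. -/
def HsGammaNormSq {n : ℕ} (s : ℝ) (γ u : ℝ → En n) : ℝ :=
  innerL2g γ u u + innerH1g γ u u + gagGammaSq s γ u

/-- The `γ`-dependent norm `‖u‖_{H^s(γ)}`. -/
def HsGammaNorm {n : ℕ} (s : ℝ) (γ u : ℝ → En n) : ℝ := Real.sqrt (HsGammaNormSq s γ u)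

/-- The bilinear form `B¹_γ`. -/
def B1 {n : ℕ} (s : ℝ) (γ u v : ℝ → En n) : ℝ :=
  ∫ x in I01, ∫ y in I01, ⟪Rop s γ u x y, Rop s γ v x y⟫ * muW γ x y

/-- The bilinear form `B²_γ`. -/
def B2 {n : ℕ} (s : ℝ) (γ u v : ℝ → En n) : ℝ :=
  ∫ x in I01, ∫ y in I01,
    ‖Rop s γ γ x y‖ ^ 2 * (⟪u y - u x, v y - v x⟫ / ‖γ y - γ x‖ ^ 2) * muW γ x y

/-- The bilinear form `B³_γ`. -/
def B3 {n : ℕ} (s : ℝ) (γ u v : ℝ → En n) : ℝ :=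
  ∫ x in I01, ∫ y in I01,
    ‖Rop s γ γ x y‖ ^ 2 * (⟪Dg γ u x, Dg γ v x⟫ + ⟪Dg γ u y, Dg γ v y⟫) * muW γ x y

/-- The Riemannian metric `G_γ(u,v)`. -/
def Gmet {n : ℕ} (s : ℝ) (γ u v : ℝ → En n) : ℝ :=
  2 * B1 s γ u v + (2 * s + 1) * B2 s γ u v + B3 s γ u v + innerH1g γ u v + innerL2g γ u v

/-- The distortion `distor(γ) = sup_{x ≠ y} d_γ(x,y)/|γ(y) − γ(x)|`, valued in `[0,∞]`. -/
def distorE {n : ℕ} (γ : ℝ → En n) : ℝ≥0∞ :=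
  ⨆ (x ∈ I01) (y ∈ I01) (_ : x ≠ y), ENNReal.ofReal (arcDist γ x y / ‖γ y - γ x‖)

/-- The distortion, real-valued. -/
def distor {n : ℕ} (γ : ℝ → En n) : ℝ := (distorE γ).toReal

/-- A `C¹` path `[0,1] → 𝓜 ⊂ H^s(𝕋,ℝⁿ)` (with respect to the `H^s` topology), recorded
together with its velocity field `V`. -/
structure C1Path (s : ℝ) (n : ℕ) where
  Γ : ℝ → ℝ → En n
  V : ℝ → ℝ → En n
  mem : ∀ t ∈ Set.Icc (0 : ℝ) 1, InM s (Γ t)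
  memV : ∀ t ∈ Set.Icc (0 : ℝ) 1, InHs s (V t)
  isDeriv : ∀ t ∈ Set.Icc (0 : ℝ) 1,
    Tendsto (fun h : ℝ => HsNorm s fun x => h⁻¹ • (Γ (t + h) x - Γ t x) - V t x)
      (𝓝[{h : ℝ | t + h ∈ Set.Icc (0 : ℝ) 1 ∧ h ≠ 0}] 0) (𝓝 0)
  contV : ∀ t ∈ Set.Icc (0 : ℝ) 1,
    Tendsto (fun τ : ℝ => HsNorm s fun x => V τ x - V t x) (𝓝[Set.Icc (0 : ℝ) 1] t) (𝓝 0)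

/-- Length of a path with respect to `G`. -/
def pathLen {s : ℝ} {n : ℕ} (P : C1Path s n) : ℝ :=
  ∫ t in (0 : ℝ)..1, Real.sqrt (Gmet s (P.Γ t) (P.V t) (P.V t))

/-- The path (Dirichlet) energy of a path with respect to `G`. -/
def pathEnergy {s : ℝ} {n : ℕ} (P : C1Path s n) : ℝ :=
  (1 / 2) * ∫ t in (0 : ℝ)..1, Gmet s (P.Γ t) (P.V t) (P.V t)

/-- The geodesic distance induced by `G`, valued in `[0,∞]` (`∞` if there is no path). -/
def geodDist (s : ℝ) {n : ℕ} (γ₀ γ₁ : ℝ → En n) : ℝ≥0∞ :=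
  ⨅ (P : C1Path s n) (_ : P.Γ 0 = γ₀ ∧ P.Γ 1 = γ₁), ENNReal.ofReal (pathLen P)

/-- `U ⊆ 𝓜` is bounded with respect to the geodesic distance `d_G`. -/
def GBounded (s : ℝ) {n : ℕ} (U : Set (ℝ → En n)) : Prop :=
  (∀ γ ∈ U, InM s γ) ∧
    ∃ γ₀, InM s γ₀ ∧ ∃ R : ℝ, ∀ γ ∈ U, geodDist s γ γ₀ ≤ ENNReal.ofReal R

/-- Weak convergence in the Hilbert space `H^s(𝕋,ℝⁿ)`. -/
def WeakHsTendsto {n : ℕ} (s : ℝ) (γk : ℕ → ℝ → En n) (γ : ℝ → En n) : Prop :=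
  ∀ v : ℝ → En n, InHs s v →
    Tendsto (fun k => HsInner s (γk k) v) atTop (𝓝 (HsInner s γ v))

/-- Directional derivative of `γ ↦ G_γ(u,v)` at `γ` in direction `w`. -/
def DGdir {n : ℕ} (s : ℝ) (γ w u v : ℝ → En n) : ℝ :=
  deriv (fun t : ℝ => Gmet s (fun x => γ x + t • w x) u v) 0

/-- `F'` is the derivative of the path `F` with respect to the `H^s` norm, on `S`. -/
def IsHsDerivOn {n : ℕ} (s : ℝ) (F F' : ℝ → ℝ → En n) (S : Set ℝ) : Prop :=
  ∀ t ∈ S,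
    Tendsto (fun h : ℝ => HsNorm s fun x => h⁻¹ • (F (t + h) x - F t x) - F' t x)
      (𝓝[{h : ℝ | t + h ∈ S ∧ h ≠ 0}] 0) (𝓝 0)

/-- The path `F` is continuous on `S` with respect to the `H^s` norm. -/
def HsContOn {n : ℕ} (s : ℝ) (F : ℝ → ℝ → En n) (S : Set ℝ) : Prop :=
  ∀ t ∈ S, Tendsto (fun τ : ℝ => HsNorm s fun x => F τ x - F t x) (𝓝[S] t) (𝓝 0)

/-- A solution of the geodesic initial value problem on `[0,∞)`, recorded as a triple
(position `Γ`, velocity `V`, acceleration `W`); the geodesic equation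
`Γ̈ + A_Γ(Γ̇)Γ̇ = 0` is expressed weakly via the Koszul formula for the
Christoffel operator `A`. -/
def GeodesicSol {n : ℕ} (s : ℝ) (γ₀ v₀ : ℝ → En n) (Γ V W : ℝ → ℝ → En n) : Prop :=
  (∀ t ∈ Set.Ici (0 : ℝ), InM s (Γ t) ∧ InHs s (V t) ∧ InHs s (W t)) ∧
  Γ 0 = γ₀ ∧ V 0 = v₀ ∧
  IsHsDerivOn s Γ V (Set.Ici 0) ∧ IsHsDerivOn s V W (Set.Ici 0) ∧
  HsContOn s V (Set.Ici 0) ∧ HsContOn s W (Set.Ici 0) ∧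
  ∀ t ∈ Set.Ici (0 : ℝ), ∀ w : ℝ → En n, InHs s w →
    Gmet s (Γ t) (W t) w + DGdir s (Γ t) (V t) (V t) w
      - (1 / 2) * DGdir s (Γ t) w (V t) (V t) = 0

/-!
Along the shorter arc from `x` to `y`, the numerator of `R^s_γ u` is the integral of
`D_γ u(t) - ⟪τ(x), τ(t)⟫ D_γ u(x)`, where `τ = D_γ γ` is the unit tangent. Its integrand is bounded
by the variations of `D_γ u` and `τ`, so Cauchy–Schwarz in the arc-length variable followed by
Hardy's inequality with weight `d_γ(x, ·)^{-2s}` bounds the `L²` norm of the numerator over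
`d_γ(x, y)^s` by the intrinsic seminorms, with constant `1 / (2s - 1)`. Passing from `d_γ` to the
chord costs the factor `distor(γ)^{2s}`. Since `|γ'|` is bounded away from zero, the intrinsic
seminorms are controlled by the `H^s` norms, and for `s - 1 > 1/2` Morrey's embedding
controls the sup norm of `u'`, which gives boundedness of `R^s_γ`.
-/

section IntegralInequalities

variable {α E : Type*} [MeasurableSpace α] [NormedAddCommGroup E] [NormedSpace ℝ E]

lemma enorm_integral_sq_le_measure_univ_mul {μ : Measure α} {f : α → E}
    (hf : AEStronglyMeasurable f μ) :
    ‖∫ a, f a ∂μ‖ₑ ^ 2 ≤ μ univ * ∫⁻ a, ‖f a‖ₑ ^ 2 ∂μ := by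
  have holder : ∫⁻ a, ‖f a‖ₑ ∂μ ≤
      (∫⁻ a, ‖f a‖ₑ ^ (2 : ℝ) ∂μ) ^ (1 / 2 : ℝ) * μ univ ^ (1 / 2 : ℝ) := by
    simpa using ENNReal.lintegral_mul_le_Lp_mul_Lq μ Real.HolderConjugate.two_two hf.enorm
      (aemeasurable_const (b := (1 : ℝ≥0∞)))
  have sq_sqrt (a : ℝ≥0∞) : (a ^ (1 / 2 : ℝ)) ^ 2 = a := by
    rw [← ENNReal.rpow_natCast, ← ENNReal.rpow_mul]; norm_num
  calc ‖∫ a, f a ∂μ‖ₑ ^ 2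
      ≤ ((∫⁻ a, ‖f a‖ₑ ^ (2 : ℝ) ∂μ) ^ (1 / 2 : ℝ) * μ univ ^ (1 / 2 : ℝ)) ^ 2 := by
        gcongr
        exact (enorm_integral_le_lintegral_enorm f).trans holder
    _ = μ univ * ∫⁻ a, ‖f a‖ₑ ^ 2 ∂μ := by
        rw [mul_pow, sq_sqrt, sq_sqrt, mul_comm]
        simp only [ENNReal.rpow_ofNat]

lemma enorm_integral_smul_sq_le {μ : Measure α} {w : α → ℝ} {f : α → E} (hw : Measurable w)
    (hw0 : ∀ a, 0 ≤ w a) (hf : AEStronglyMeasurable f μ) :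
    ‖∫ a, w a • f a ∂μ‖ₑ ^ 2 ≤
      (∫⁻ a, ENNReal.ofReal (w a) ∂μ) * ∫⁻ a, ENNReal.ofReal (w a) * ‖f a‖ₑ ^ 2 ∂μ := by
  have hw' : Measurable fun a => ENNReal.ofReal (w a) := hw.ennreal_ofReal
  have hfw : AEStronglyMeasurable f (μ.withDensity fun a => ENNReal.ofReal (w a)) :=
    hf.mono_ac (withDensity_absolutelyContinuous μ _)
  have h := enorm_integral_sq_le_measure_univ_mul hfw
  rw [integral_withDensity_eq_integral_toReal_smul hw' (by simp), withDensity_apply _ .univ,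
    Measure.restrict_univ, lintegral_withDensity_eq_lintegral_mul_non_measurable _ hw'
      (by simp)] at h
  simpa only [ENNReal.toReal_ofReal (hw0 _), Pi.mul_apply] using h

lemma enorm_integral_sub_integral_sq_le {μ : Measure α} [IsProbabilityMeasure μ] {f g : α → E}
    (hf : Integrable f μ) (hg : Integrable g μ) :
    ‖(∫ a, f a ∂μ) - ∫ b, g b ∂μ‖ₑ ^ 2 ≤ ∫⁻ b, ∫⁻ a, ‖f a - g b‖ₑ ^ 2 ∂μ ∂μ := by
  have hsub : Integrable (fun z : α × α => f z.2 - g z.1) (μ.prod μ) :=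
    (hf.comp_snd μ).sub (hg.comp_fst μ)
  have heq : (∫ a, f a ∂μ) - ∫ b, g b ∂μ = ∫ z, f z.2 - g z.1 ∂μ.prod μ := by
    rw [integral_sub (hf.comp_snd μ) (hg.comp_fst μ), integral_fun_snd, integral_fun_fst]
    simp
  calc ‖(∫ a, f a ∂μ) - ∫ b, g b ∂μ‖ₑ ^ 2
      ≤ ∫⁻ z, ‖f z.2 - g z.1‖ₑ ^ 2 ∂μ.prod μ := by
        simpa [heq] using enorm_integral_sq_le_measure_univ_mul hsub.aestronglyMeasurable
    _ = ∫⁻ b, ∫⁻ a, ‖f a - g b‖ₑ ^ 2 ∂μ ∂μ :=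
        lintegral_prod _ (hsub.aestronglyMeasurable.enorm.pow_const 2)

lemma lintegral_lintegral_add_const_mul {β : Type*} [MeasurableSpace β] {μ : Measure α}
    {ν : Measure β} [SFinite ν] {f g : α → β → ℝ≥0∞} (hf : Measurable (Function.uncurry f))
    {c : ℝ≥0∞} (hc : c ≠ ⊤) :
    ∫⁻ a, ∫⁻ b, f a b + c * g a b ∂ν ∂μ =
      (∫⁻ a, ∫⁻ b, f a b ∂ν ∂μ) + c * ∫⁻ a, ∫⁻ b, g a b ∂ν ∂μ := by
  have inner (a : α) : ∫⁻ b, f a b + c * g a b ∂ν = (∫⁻ b, f a b ∂ν) + c * ∫⁻ b, g a b ∂ν := by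
    rw [lintegral_add_left hf.of_uncurry_left, lintegral_const_mul' _ _ hc]
  have hmeas : Measurable fun a => ∫⁻ b, f a b ∂ν := hf.lintegral_prod_right'
  rw [lintegral_congr inner, lintegral_add_left hmeas, lintegral_const_mul' _ _ hc]

lemma lintegral_lintegral_const_mul {β : Type*} [MeasurableSpace β] {μ : Measure α}
    {ν : Measure β} {f : α → β → ℝ≥0∞} {c : ℝ≥0∞} (hc : c ≠ ⊤) :
    ∫⁻ a, ∫⁻ b, c * f a b ∂ν ∂μ = c * ∫⁻ a, ∫⁻ b, f a b ∂ν ∂μ := by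
  simp_rw [lintegral_const_mul' _ _ hc]

lemma setLIntegral_setLIntegral_mono {β : Type*} [MeasurableSpace β] {μ : Measure α}
    {ν : Measure β} {f g : α → β → ℝ≥0∞} {s : Set α} {t : Set β} (hs : MeasurableSet s)
    (ht : MeasurableSet t) (h : ∀ a ∈ s, ∀ b ∈ t, f a b ≤ g a b) :
    ∫⁻ a in s, ∫⁻ b in t, f a b ∂ν ∂μ ≤ ∫⁻ a in s, ∫⁻ b in t, g a b ∂ν ∂μ :=
  setLIntegral_mono' hs fun a ha => setLIntegral_mono' ht (h a ha)

lemma setLIntegral_comp_contraction_le {S : Set ℝ} (hS : Convex ℝ S) (hSm : MeasurableSet S)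
    {x : ℝ} (hx : x ∈ S) {c : ℝ} (hc : 0 < c) (hc1 : c ≤ 1) (g : ℝ → ℝ≥0∞) :
    ∫⁻ z in S, g (x + c * (z - x)) ≤ ENNReal.ofReal c⁻¹ * ∫⁻ z in S, g z := by
  have hderiv (z : ℝ) (_ : z ∈ S) : HasDerivWithinAt (fun z => x + c * (z - x)) c S z := by
    simpa using ((((hasDerivAt_id z).sub_const x).const_mul c).const_add x).hasDerivWithinAt
  have hinj : InjOn (fun z => x + c * (z - x)) S := fun a _ b _ hab => by
    simpa [hc.ne'] using hab
  have himage : (fun z => x + c * (z - x)) '' S ⊆ S := by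
    rintro _ ⟨z, hz, rfl⟩
    exact hS.add_smul_sub_mem hx hz ⟨hc.le, hc1⟩
  have hcov := lintegral_image_eq_lintegral_abs_deriv_mul hSm hderiv hinj g
  rw [lintegral_const_mul' _ _ ENNReal.ofReal_ne_top, abs_of_pos hc] at hcov
  calc ∫⁻ z in S, g (x + c * (z - x))
      = ENNReal.ofReal c⁻¹ * (ENNReal.ofReal c * ∫⁻ z in S, g (x + c * (z - x))) := by
        rw [← mul_assoc, ← ENNReal.ofReal_mul (by positivity), inv_mul_cancel₀ hc.ne',
          ENNReal.ofReal_one, one_mul]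
    _ ≤ ENNReal.ofReal c⁻¹ * ∫⁻ z in S, g z := by
        rw [← hcov]
        gcongr

end IntegralInequalities

section Hardy

lemma setLIntegral_Ioc_comp_neg (a b : ℝ) (g : ℝ → ℝ≥0∞) :
    ∫⁻ t in Ioc a b, g (-t) = ∫⁻ t in Ioc (-b) (-a), g t := by
  rw [← setLIntegral_congr Ioo_ae_eq_Ioc, ← setLIntegral_congr Ioo_ae_eq_Ioc]
  simpa using (Measure.measurePreserving_neg (volume : Measure ℝ)).setLIntegral_comp_preimage_emb
    (MeasurableEquiv.neg ℝ).measurableEmbedding g (Ioo (-b) (-a))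

variable {w : ℝ → ℝ} {p : ℝ}

lemma setLIntegral_Icc_div_rpow_primitive_le (hw : Continuous w) (hpos : ∀ t, 0 < w t) (hp : 1 < p)
    {x t m : ℝ} (hxt : x < t) (htm : t ≤ m) :
    ∫⁻ y in Icc t m, ENNReal.ofReal (w y / |∫ a in x..y, w a| ^ p) ≤
      ENNReal.ofReal (1 / (p - 1)) * ENNReal.ofReal (1 / |∫ a in x..t, w a| ^ (p - 1)) := by
  set W : ℝ → ℝ := fun y => ∫ a in x..y, w a
  have hWpos {y : ℝ} (hy : x < y) : 0 < W y :=
    intervalIntegral.intervalIntegral_pos_of_pos (hw.intervalIntegrable _ _) hpos hy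
  have hW (y : ℝ) : HasDerivAt W (w y) y := (hw.integral_hasStrictDerivAt x y).hasDerivAt
  have hcont : ContinuousOn (fun y => w y / |W y| ^ p) (Icc t m) := fun y hy => by
    have hy := (abs_pos.2 (hWpos (hxt.trans_le hy.1)).ne')
    exact (hw.continuousAt.div ((hW y).continuousAt.abs.rpow_const (.inl hy.ne'))
      (rpow_pos_of_pos hy p).ne').continuousWithinAt
  have hprim (y : ℝ) (hy : y ∈ uIcc t m) :
      HasDerivAt (fun y => -(1 / (p - 1)) * W y ^ (1 - p)) (w y / |W y| ^ p) y := by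
    have hy := hWpos (hxt.trans_le (uIcc_of_le htm ▸ hy).1)
    refine (((hW y).rpow_const (.inl hy.ne')).const_mul (-(1 / (p - 1)))).congr_deriv ?_
    have : p - 1 ≠ 0 := by linarith
    rw [abs_of_pos hy, show 1 - p - 1 = -p by ring, rpow_neg hy.le]
    field_simp
    ring
  rw [← ENNReal.ofReal_mul (one_div_nonneg.2 (by linarith)),
    ← ofReal_integral_eq_lintegral_ofReal hcont.integrableOn_Icc
      (ae_of_all _ fun y => div_nonneg (hpos y).le (by positivity)),
    integral_Icc_eq_integral_Ioc, ← intervalIntegral.integral_of_le htm,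
    intervalIntegral.integral_eq_sub_of_hasDerivAt hprim (hcont.intervalIntegrable_of_Icc htm),
    abs_of_pos (hWpos hxt), one_div (W t ^ (p - 1)), ← rpow_neg (hWpos hxt).le, neg_sub]
  have : 0 ≤ 1 / (p - 1) * W m ^ (1 - p) :=
    mul_nonneg (one_div_nonneg.2 (by linarith)) (rpow_nonneg (hWpos (hxt.trans_le htm)).le _)
  exact ENNReal.ofReal_le_ofReal (by linarith)

lemma hardy_Ioc_right (hw : Continuous w) (hpos : ∀ t, 0 < w t) {g : ℝ → ℝ≥0∞} (hg : Measurable g)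
    (hp : 1 < p) (x m : ℝ) :
    ∫⁻ y in Ioc x m, ENNReal.ofReal (w y / |∫ a in x..y, w a| ^ p) * ∫⁻ t in uIoc x y, g t ≤
      ENNReal.ofReal (1 / (p - 1)) *
        ∫⁻ t in Ioc x m, ENNReal.ofReal (1 / |∫ a in x..t, w a| ^ (p - 1)) * g t := by
  set k : ℝ → ℝ≥0∞ := fun y => ENNReal.ofReal (w y / |∫ a in x..y, w a| ^ p)
  have hk : Measurable k := by
    have := intervalIntegral.continuous_primitive (μ := volume)
      (fun a b => hw.intervalIntegrable a b) x
    fun_prop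
  have inner (y : ℝ) (hy : y ∈ Ioc x m) :
      k y * ∫⁻ t in uIoc x y, g t = ∫⁻ t in Ioc x m, (Iic y).indicator (fun t => k y * g t) t := by
    rw [setLIntegral_indicator measurableSet_Iic, Iic_inter_Ioc_of_le hy.2, uIoc_of_le hy.1.le,
      lintegral_const_mul' _ _ ENNReal.ofReal_ne_top]
  have swap (t y : ℝ) : (Iic y).indicator (fun t => k y * g t) t = (Ici t).indicator k y * g t := by
    by_cases h : t ≤ y <;> simp [indicator, h]
  have hmeas : Measurable (Function.uncurry fun y t => (Iic y).indicator (fun t => k y * g t) t) :=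
    ((hk.comp measurable_fst).mul (hg.comp measurable_snd)).indicator
      (measurableSet_le measurable_snd measurable_fst)
  rw [setLIntegral_congr_fun measurableSet_Ioc inner,
    lintegral_lintegral_swap hmeas.aemeasurable, ← lintegral_const_mul' _ _ ENNReal.ofReal_ne_top]
  refine setLIntegral_mono' measurableSet_Ioc fun t ht => ?_
  have tail : Ici t ∩ Ioc x m = Icc t m := by
    ext y; exact ⟨fun h => ⟨h.1, h.2.2⟩, fun h => ⟨h.1, ht.1.trans_le h.1, h.2⟩⟩
  simp_rw [swap t]
  rw [lintegral_mul_const _ (hk.indicator measurableSet_Ici),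
    setLIntegral_indicator measurableSet_Ici, tail, ← mul_assoc]
  gcongr
  exact setLIntegral_Icc_div_rpow_primitive_le hw hpos hp ht.1 ht.2

lemma hardy_Ioc_left (hw : Continuous w) (hpos : ∀ t, 0 < w t) {g : ℝ → ℝ≥0∞} (hg : Measurable g)
    (hp : 1 < p) (x m : ℝ) :
    ∫⁻ y in Ioc m x, ENNReal.ofReal (w y / |∫ a in x..y, w a| ^ p) * ∫⁻ t in uIoc x y, g t ≤
      ENNReal.ofReal (1 / (p - 1)) *
        ∫⁻ t in Ioc m x, ENNReal.ofReal (1 / |∫ a in x..t, w a| ^ (p - 1)) * g t := by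
  have reflect_primitive (y : ℝ) : |∫ a in (-x)..y, w (-a)| = |∫ a in x..(-y), w a| := by
    rw [intervalIntegral.integral_comp_neg, intervalIntegral.integral_symm, abs_neg, neg_neg]
  have reflect_inner (y : ℝ) : ∫⁻ t in uIoc (-x) y, g (-t) = ∫⁻ t in uIoc x (-y), g t := by
    rw [uIoc, uIoc, setLIntegral_Ioc_comp_neg, ← max_neg_neg, ← min_neg_neg, neg_neg]
  have h := hardy_Ioc_right (w := fun t => w (-t)) (by fun_prop) (fun t => hpos _)
    (hg.comp measurable_neg) hp (-x) (-m)
  simp only [Function.comp_apply, reflect_primitive, reflect_inner] at h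
  rw [setLIntegral_Ioc_comp_neg (g := fun y =>
      ENNReal.ofReal (w y / |∫ a in x..y, w a| ^ p) * ∫⁻ t in uIoc x y, g t),
    setLIntegral_Ioc_comp_neg (g := fun t =>
      ENNReal.ofReal (1 / |∫ a in x..t, w a| ^ (p - 1)) * g t)] at h
  simpa only [neg_neg] using h

lemma hardy_Ioc (hw : Continuous w) (hpos : ∀ t, 0 < w t) {g : ℝ → ℝ≥0∞} (hg : Measurable g)
    (hp : 1 < p) {a x b : ℝ} (hx : x ∈ Icc a b) :
    ∫⁻ y in Ioc a b, ENNReal.ofReal (w y / |∫ τ in x..y, w τ| ^ p) * ∫⁻ t in uIoc x y, g t ≤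
      ENNReal.ofReal (1 / (p - 1)) *
        ∫⁻ t in Ioc a b, ENNReal.ofReal (1 / |∫ τ in x..t, w τ| ^ (p - 1)) * g t := by
  have hdisj : Disjoint (Ioc a x) (Ioc x b) := Ioc_disjoint_Ioc_of_le le_rfl
  rw [← Ioc_union_Ioc_eq_Ioc hx.1 hx.2, lintegral_union measurableSet_Ioc hdisj,
    lintegral_union measurableSet_Ioc hdisj, mul_add]
  exact add_le_add (hardy_Ioc_left hw hpos hg hp x a) (hardy_Ioc_right hw hpos hg hp x b)

end Hardy

section Circle

lemma dT_eq_norm (x y : ℝ) : dT x y = ‖((x - y : ℝ) : UnitAddCircle)‖ := by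
  rw [UnitAddCircle.norm_eq]
  exact le_antisymm (ciInf_le ⟨0, forall_mem_range.2 fun _ => abs_nonneg _⟩ (round (x - y)))
    (le_ciInf (round_le _))

lemma dT_nonneg (x y : ℝ) : 0 ≤ dT x y := dT_eq_norm x y ▸ norm_nonneg _

lemma dT_le (x y : ℝ) (k : ℤ) : dT x y ≤ |x - y - k| := by
  rw [dT_eq_norm, UnitAddCircle.norm_eq]
  exact round_le _ _

lemma dT_pos {x y : ℝ} (hx : x ∈ I01) (hy : y ∈ I01) (h : x ≠ y) : 0 < dT x y := by
  rw [dT_eq_norm, norm_pos_iff, AddCircle.coe_sub, sub_ne_zero]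
  rw [I01, ← zero_add (1 : ℝ)] at hx hy
  exact (AddCircle.coe_eq_coe_iff_of_mem_Ico hx hy).not.2 h

lemma measurable_dT : Measurable fun z : ℝ × ℝ => dT z.1 z.2 := by
  simp_rw [dT_eq_norm]
  fun_prop

lemma measurableSet_I01 : MeasurableSet I01 := measurableSet_Ico

lemma isProbabilityMeasure_restrict_I01 : IsProbabilityMeasure (volume.restrict I01) :=
  ⟨by simp [I01]⟩

lemma integral_I01 {E : Type*} [NormedAddCommGroup E] [NormedSpace ℝ E] (f : ℝ → E) :
    ∫ x in I01, f x = ∫ x in (0 : ℝ)..1, f x := by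
  rw [intervalIntegral.integral_of_le zero_le_one, I01, integral_Ico_eq_integral_Ioc]

lemma integrableOn_I01 {E : Type*} [NormedAddCommGroup E] {f : ℝ → E} (hf : Continuous f) :
    IntegrableOn f I01 :=
  hf.integrableOn_Icc.mono_set Ico_subset_Icc_self

lemma setLIntegral_I01_of_periodic {g : ℝ → ℝ≥0∞} (hg : Function.Periodic g 1) (t : ℝ) :
    ∫⁻ y in I01, g y = ∫⁻ y in Ioc t (t + 1), g y := by
  rw [I01, setLIntegral_congr Ico_ae_eq_Ioc]
  simpa only [zero_add] using (isAddFundamentalDomain_Ioc one_pos 0).setLIntegral_eq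
    (isAddFundamentalDomain_Ioc one_pos t) g hg.map_vadd_zmultiples

variable {E : Type*} [NormedAddCommGroup E] {f : ℝ → E}

lemma supNorm_nonneg (f : ℝ → E) : 0 ≤ supNorm f := Real.iSup_nonneg fun _ => norm_nonneg _

lemma norm_le_supNorm (hf : Continuous f) (hp : Function.Periodic f 1) (x : ℝ) :
    ‖f x‖ ≤ supNorm f := by
  refine le_ciSup (f := fun x => ‖f x‖) ?_ x
  obtain ⟨R, hR⟩ := (hp.isBounded_of_continuous one_ne_zero hf).exists_norm_le
  exact ⟨R, forall_mem_range.2 fun x => hR _ (mem_range_self x)⟩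

lemma enorm_sq_eq_ofReal (a : E) : ‖a‖ₑ ^ 2 = ENNReal.ofReal (‖a‖ ^ 2) := by
  rw [← ofReal_norm, ENNReal.ofReal_pow (norm_nonneg a)]

end Circle

section Morrey

variable {E : Type*} [NormedAddCommGroup E] {σ : ℝ} {v : ℝ → E}

/-- The integrand of the Gagliardo seminorm `gagliardoSqE`. -/
def gagliardoKernel (σ : ℝ) (v : ℝ → E) (x y : ℝ) : ℝ≥0∞ :=
  ENNReal.ofReal (‖v y - v x‖ ^ 2 / dT x y ^ (2 * σ + 1))

lemma measurable_gagliardoKernel (hv : Continuous v) :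
    Measurable (Function.uncurry (gagliardoKernel σ v)) := by
  have hdiff : Continuous fun z : ℝ × ℝ => ‖v z.2 - v z.1‖ ^ 2 := by fun_prop
  exact (hdiff.measurable.div (measurable_dT.pow_const _)).ennreal_ofReal

lemma enorm_sub_sq_le_mul_gagliardoKernel (hσ : -(1 / 2) ≤ σ) {a b δ : ℝ} (ha : a ∈ I01)
    (hb : b ∈ I01) (hab : |a - b| ≤ δ) :
    ‖v b - v a‖ₑ ^ 2 ≤ ENNReal.ofReal (δ ^ (2 * σ + 1)) * gagliardoKernel σ v a b := by
  rcases eq_or_ne a b with rfl | hne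
  · simp
  have hpos := dT_pos ha hb hne
  have hδ : dT a b ≤ δ := (by simpa using dT_le a b 0 : dT a b ≤ |a - b|).trans hab
  have hpow : dT a b ^ (2 * σ + 1) ≤ δ ^ (2 * σ + 1) := rpow_le_rpow hpos.le hδ (by linarith)
  have hδ0 : 0 ≤ δ ^ (2 * σ + 1) := rpow_nonneg (hpos.le.trans hδ) _
  rw [gagliardoKernel, enorm_sq_eq_ofReal, ← ENNReal.ofReal_mul hδ0, mul_div_assoc']
  refine ENNReal.ofReal_le_ofReal ((le_div_iff₀ (rpow_pos_of_pos hpos _)).2 ?_)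
  rw [mul_comm]
  gcongr

variable [NormedSpace ℝ E]

/-- The mean of `v` over the image of the period `I01` under the contraction by the factor `δ`
towards `x`. -/
def contractionMean (v : ℝ → E) (x δ : ℝ) : E := ∫ z in I01, v (x + δ * (z - x))

lemma contractionMean_one (v : ℝ → E) (x : ℝ) : contractionMean v x 1 = ∫ z in I01, v z := by
  simp [contractionMean]

lemma continuous_contractionMean (hv : Continuous v) (x : ℝ) :
    Continuous (contractionMean v x) := by
  unfold contractionMean
  simp_rw [integral_I01]
  exact intervalIntegral.continuous_parametric_intervalIntegral_of_continuous'
    (by simp only [Function.uncurry_def]; fun_prop) 0 1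

lemma enorm_contractionMean_sub_half_sq_le (hσ : -(1 / 2) ≤ σ) (hv : Continuous v) {x δ : ℝ}
    (hx : x ∈ I01) (hδ : 0 < δ) (hδ1 : δ ≤ 1) :
    ‖contractionMean v x δ - contractionMean v x (δ / 2)‖ₑ ^ 2 ≤
      ENNReal.ofReal (2 * δ ^ (2 * σ - 1)) * gagliardoSqE σ v := by
  have := isProbabilityMeasure_restrict_I01
  have hconv : Convex ℝ I01 := convex_Ico 0 1
  have hmem {c : ℝ} (hc : 0 ≤ c) (hc1 : c ≤ 1) {z : ℝ} (hz : z ∈ I01) : x + c * (z - x) ∈ I01 :=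
    hconv.add_smul_sub_mem hx hz ⟨hc, hc1⟩
  have hnear {a b : ℝ} (ha : a ∈ I01) (hb : b ∈ I01) :
      |x + δ / 2 * (b - x) - (x + δ * (a - x))| ≤ δ := by
    rw [abs_le]; constructor <;> nlinarith [ha.1, ha.2, hb.1, hb.2, hx.1, hx.2]
  calc ‖contractionMean v x δ - contractionMean v x (δ / 2)‖ₑ ^ 2
      ≤ ∫⁻ b in I01, ∫⁻ a in I01, ‖v (x + δ * (a - x)) - v (x + δ / 2 * (b - x))‖ₑ ^ 2 :=
        enorm_integral_sub_integral_sq_le (integrableOn_I01 (by fun_prop))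
          (integrableOn_I01 (by fun_prop))
    _ ≤ ∫⁻ b in I01, ∫⁻ a in I01, ENNReal.ofReal (δ ^ (2 * σ + 1)) *
          gagliardoKernel σ v (x + δ / 2 * (b - x)) (x + δ * (a - x)) :=
        setLIntegral_setLIntegral_mono measurableSet_I01 measurableSet_I01 fun b hb a ha =>
          enorm_sub_sq_le_mul_gagliardoKernel hσ (hmem (by linarith) (by linarith) hb)
            (hmem hδ.le hδ1 ha) (hnear ha hb)
    _ ≤ ENNReal.ofReal (δ ^ (2 * σ + 1)) * ∫⁻ b in I01, ENNReal.ofReal δ⁻¹ *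
          ∫⁻ a in I01, gagliardoKernel σ v (x + δ / 2 * (b - x)) a := by
        rw [lintegral_lintegral_const_mul ENNReal.ofReal_ne_top]
        gcongr with b
        exact setLIntegral_comp_contraction_le hconv measurableSet_I01 hx hδ hδ1 _
    _ ≤ ENNReal.ofReal (δ ^ (2 * σ + 1)) *
          (ENNReal.ofReal δ⁻¹ * (ENNReal.ofReal (δ / 2)⁻¹ * gagliardoSqE σ v)) := by
        rw [lintegral_const_mul' _ _ ENNReal.ofReal_ne_top]
        gcongr
        exact setLIntegral_comp_contraction_le hconv measurableSet_I01 hx (half_pos hδ)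
          (by linarith) fun b => ∫⁻ a in I01, gagliardoKernel σ v b a
    _ = ENNReal.ofReal (2 * δ ^ (2 * σ - 1)) * gagliardoSqE σ v := by
        rw [← mul_assoc, ← mul_assoc, ← ENNReal.ofReal_mul (by positivity),
          ← ENNReal.ofReal_mul (by positivity), show 2 * σ + 1 = 2 * σ - 1 + 1 + 1 by ring,
          rpow_add_one hδ.ne', rpow_add_one hδ.ne']
        congr 2
        field_simp

variable [CompleteSpace E]

lemma dist_setIntegral_I01_le (hσ : 1 / 2 < σ) (hv : Continuous v) (hG : gagliardoSqE σ v ≠ ⊤)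
    {x : ℝ} (hx : x ∈ I01) :
    dist (∫ z in I01, v z) (v x) ≤
      √(2 * (gagliardoSqE σ v).toReal) / (1 - (1 / 2) ^ (σ - 1 / 2)) := by
  have := isProbabilityMeasure_restrict_I01
  set q : ℝ := (1 / 2 : ℝ) ^ (σ - 1 / 2) with hq
  have hq1 : q < 1 := rpow_lt_one (by norm_num) (by norm_num) (by linarith)
  have hstep (k : ℕ) : dist (contractionMean v x ((1 / 2) ^ k))
      (contractionMean v x ((1 / 2) ^ (k + 1))) ≤ √(2 * (gagliardoSqE σ v).toReal) * q ^ k := by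
    have h := enorm_contractionMean_sub_half_sq_le (σ := σ) (by linarith) hv hx
      (show 0 < (1 / 2 : ℝ) ^ k by positivity) (pow_le_one₀ (by norm_num) (by norm_num))
    have hqk : ((1 / 2 : ℝ) ^ k) ^ (2 * σ - 1) = (q ^ k) ^ 2 := by
      rw [hq, ← rpow_natCast, ← rpow_natCast, ← rpow_natCast, ← rpow_mul (by positivity),
        ← rpow_mul (by positivity), ← rpow_mul (by positivity)]
      congr 1; push_cast; ring
    rw [enorm_sq_eq_ofReal, ← ENNReal.ofReal_toReal hG, ← ENNReal.ofReal_mul (by positivity),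
      ENNReal.ofReal_le_ofReal_iff (by positivity), hqk] at h
    rw [dist_eq_norm, pow_succ, mul_one_div]
    refine (sq_le_sq₀ (norm_nonneg _) (by positivity)).1 (h.trans_eq ?_)
    rw [mul_pow, sq_sqrt (by positivity)]; ring
  have hlim : Tendsto (fun k : ℕ => contractionMean v x ((1 / 2) ^ k)) atTop (𝓝 (v x)) := by
    have h0 := ((continuous_contractionMean hv x).tendsto 0).comp
      (tendsto_pow_atTop_nhds_zero_of_lt_one (r := (1 / 2 : ℝ)) (by norm_num) (by norm_num))
    simpa [contractionMean, Function.comp_def] using h0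
  simpa only [pow_zero, contractionMean_one] using
    dist_le_of_le_geometric_of_tendsto₀ q _ hq1 hstep hlim

lemma exists_supNorm_sq_le_mul_gagliardoSqE (E : Type*) [NormedAddCommGroup E] [NormedSpace ℝ E]
    [CompleteSpace E] (hσ : 1 / 2 < σ) :
    ∃ C : ℝ, 0 ≤ C ∧ ∀ v : ℝ → E, Continuous v → Function.Periodic v 1 → gagliardoSqE σ v ≠ ⊤ →
      supNorm v ^ 2 ≤ C * ((∫ x in I01, ‖v x‖ ^ 2) + (gagliardoSqE σ v).toReal) := by
  set q : ℝ := (1 / 2 : ℝ) ^ (σ - 1 / 2)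
  refine ⟨2 * (1 + 2 / (1 - q) ^ 2), by positivity, fun v hv hp hG => ?_⟩
  set G := (gagliardoSqE σ v).toReal
  set I := ∫ x in I01, ‖v x‖ ^ 2
  have hG0 : 0 ≤ G := ENNReal.toReal_nonneg
  have := isProbabilityMeasure_restrict_I01
  have hmean : ‖∫ z in I01, v z‖ ^ 2 ≤ I := by
    have h := enorm_integral_sq_le_measure_univ_mul (integrableOn_I01 hv).aestronglyMeasurable
    simp_rw [measure_univ, one_mul, enorm_sq_eq_ofReal] at h
    rwa [← ofReal_integral_eq_lintegral_ofReal (integrableOn_I01 (by fun_prop))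
      (ae_of_all _ fun _ => by positivity), ENNReal.ofReal_le_ofReal_iff (by positivity)] at h
  have hI : √I ^ 2 = I := sq_sqrt ((sq_nonneg _).trans hmean)
  have hosc : (√(2 * G) / (1 - q)) ^ 2 = 2 / (1 - q) ^ 2 * G := by
    rw [div_pow, sq_sqrt (by positivity)]; ring
  have hq : 0 ≤ 2 / (1 - q) ^ 2 := by positivity
  have hsup : supNorm v ≤ √I + √(2 * G) / (1 - q) := ciSup_le fun x => by
    obtain ⟨y, hy, hxy⟩ := hp.exists_mem_Ico₀ one_pos x
    have htri := dist_triangle 0 (∫ z in I01, v z) (v y)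
    rw [dist_zero_left, dist_zero_left] at htri
    rw [hxy]
    linarith [le_sqrt_of_sq_le hmean, dist_setIntegral_I01_le hσ hv hG hy]
  calc supNorm v ^ 2 ≤ (√I + √(2 * G) / (1 - q)) ^ 2 := by gcongr; exact supNorm_nonneg v
    _ ≤ 2 * (√I ^ 2 + (√(2 * G) / (1 - q)) ^ 2) := add_sq_le
    _ ≤ 2 * (1 + 2 / (1 - q) ^ 2) * (I + G) := by
      rw [hI, hosc]
      nlinarith [mul_nonneg hq (hI ▸ sq_nonneg √I)]

end Morrey

section Loops

/-- A `C¹` map on the circle, given as a `1`-periodic map on the line. -/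
structure IsC1Loop {E : Type*} [NormedAddCommGroup E] [NormedSpace ℝ E] (u : ℝ → E) : Prop where
  periodic : Function.Periodic u 1
  contDiff : ContDiff ℝ 1 u

/-- A `C¹` embedding of the circle: an immersed loop that is injective on one period. -/
structure IsC1Embedding {E : Type*} [NormedAddCommGroup E] [NormedSpace ℝ E] (γ : ℝ → E) : Prop
    extends IsC1Loop γ where
  injOn : InjOn γ I01
  deriv_ne_zero : ∀ x, deriv γ x ≠ 0

variable {E : Type*} [NormedAddCommGroup E] [NormedSpace ℝ E] {u γ : ℝ → E}

lemma IsC1Loop.continuous_deriv (hu : IsC1Loop u) : Continuous (deriv u) :=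
  hu.contDiff.continuous_deriv le_rfl

lemma IsC1Loop.periodic_deriv (hu : IsC1Loop u) : Function.Periodic (deriv u) 1 := fun x => by
  rw [← deriv_comp_add_const, funext hu.periodic]

lemma IsC1Loop.periodic_norm_deriv (hu : IsC1Loop u) :
    Function.Periodic (fun x => ‖deriv u x‖) 1 :=
  hu.periodic_deriv.comp norm

lemma IsC1Loop.norm_deriv_le (hu : IsC1Loop u) (x : ℝ) : ‖deriv u x‖ ≤ supNorm (deriv u) :=
  norm_le_supNorm hu.continuous_deriv hu.periodic_deriv x

lemma IsC1Loop.integral_deriv [CompleteSpace E] (hu : IsC1Loop u) (x y : ℝ) :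
    ∫ t in x..y, deriv u t = u y - u x :=
  intervalIntegral.integral_deriv_eq_sub
    (fun _ _ => (hu.contDiff.differentiable one_ne_zero).differentiableAt)
    (hu.continuous_deriv.intervalIntegrable x y)

lemma IsC1Embedding.norm_deriv_pos (hγ : IsC1Embedding γ) (x : ℝ) : 0 < ‖deriv γ x‖ :=
  norm_pos_iff.2 (hγ.deriv_ne_zero x)

lemma IsC1Embedding.exists_pos_le_norm_deriv (hγ : IsC1Embedding γ) :
    ∃ c, 0 < c ∧ ∀ x, c ≤ ‖deriv γ x‖ := by
  have hcont : Continuous fun x => ‖deriv γ x‖⁻¹ :=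
    hγ.continuous_deriv.norm.inv₀ fun x => (hγ.norm_deriv_pos x).ne'
  have hle (x : ℝ) : ‖deriv γ x‖⁻¹ ≤ supNorm fun x => ‖deriv γ x‖⁻¹ := by
    simpa only [norm_inv, norm_norm] using
      norm_le_supNorm hcont (hγ.periodic_norm_deriv.comp Inv.inv) x
  exact ⟨_, inv_pos.2 ((inv_pos.2 (hγ.norm_deriv_pos 0)).trans_le (hle 0)),
    fun x => inv_le_of_inv_le₀ (hγ.norm_deriv_pos x) (hle x)⟩

end Loops

section ArcDist

variable {n : ℕ} {γ : ℝ → En n}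

lemma arcDist_nonneg (γ : ℝ → En n) (x y : ℝ) : 0 ≤ arcDist γ x y :=
  Real.iInf_nonneg fun _ => abs_nonneg _

lemma arcDist_le (γ : ℝ → En n) (x y : ℝ) (k : ℤ) :
    arcDist γ x y ≤ |∫ t in x..(y + (k : ℝ)), ‖deriv γ t‖| :=
  ciInf_le ⟨0, forall_mem_range.2 fun _ => abs_nonneg _⟩ k

lemma periodic_arcDist (γ : ℝ → En n) (x : ℝ) : Function.Periodic (arcDist γ x) 1 := fun y => by
  refine Eq.trans ?_ ((Equiv.addRight (1 : ℤ)).iInf_comp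
    (g := fun k : ℤ => |∫ t in x..y + (k : ℝ), ‖deriv γ t‖|))
  simp only [arcDist, Equiv.coe_addRight, Int.cast_add, Int.cast_one, ← add_assoc,
    add_right_comm y 1]

lemma measurable_arcDist (hγ : Continuous (deriv γ)) :
    Measurable fun z : ℝ × ℝ => arcDist γ z.1 z.2 := by
  have hint (a b : ℝ) : IntervalIntegrable (fun t => ‖deriv γ t‖) volume a b :=
    hγ.norm.intervalIntegrable a b
  have hprim := intervalIntegral.continuous_primitive hint 0
  refine Measurable.iInf fun k => Continuous.measurable (Continuous.congr
    (f := fun z : ℝ × ℝ => |(∫ t in 0..z.2 + (k : ℝ), ‖deriv γ t‖) - ∫ t in 0..z.1, ‖deriv γ t‖|)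
    (by fun_prop) fun z => ?_)
  rw [intervalIntegral.integral_interval_sub_left (hint 0 _) (hint 0 _)]

lemma mul_dT_le_arcDist (hγ : Continuous (deriv γ)) {c : ℝ} (hc : 0 ≤ c)
    (h : ∀ t, c ≤ ‖deriv γ t‖) (x y : ℝ) : c * dT x y ≤ arcDist γ x y := by
  have ordered {a b : ℝ} (hab : a ≤ b) : c * (b - a) ≤ ∫ t in a..b, ‖deriv γ t‖ := by
    simpa [mul_comm] using intervalIntegral.integral_mono_on (μ := volume) (f := fun _ => c) hab
      intervalIntegrable_const (hγ.norm.intervalIntegrable a b) fun t _ => h t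
  have unordered (a b : ℝ) : c * |a - b| ≤ |∫ t in a..b, ‖deriv γ t‖| := by
    rcases le_total a b with hab | hab
    · rw [abs_sub_comm, abs_of_nonneg (sub_nonneg.2 hab)]
      exact (ordered hab).trans (le_abs_self _)
    · rw [abs_of_nonneg (sub_nonneg.2 hab), intervalIntegral.integral_symm, abs_neg]
      exact (ordered hab).trans (le_abs_self _)
  refine le_ciInf fun k => le_trans ?_ (unordered x (y + k))
  rw [← sub_sub]
  exact mul_le_mul_of_nonneg_left (dT_le x y k) hc

lemma arcDist_le_mul_dT {W : ℝ} (h : ∀ t, ‖deriv γ t‖ ≤ W) (x y : ℝ) :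
    arcDist γ x y ≤ W * dT x y := by
  rw [dT, Real.mul_iInf_of_nonneg ((norm_nonneg _).trans (h 0))]
  refine le_ciInf fun k => (arcDist_le γ x y k).trans ?_
  rw [sub_sub, abs_sub_comm]
  exact intervalIntegral.norm_integral_le_of_norm_le_const fun t _ => (norm_norm _).trans_le (h t)

lemma IsC1Embedding.arcDist_pos (hγ : IsC1Embedding γ) {x y : ℝ} (hx : x ∈ I01) (hy : y ∈ I01)
    (hxy : x ≠ y) : 0 < arcDist γ x y := by
  obtain ⟨c, hc, hcγ⟩ := hγ.exists_pos_le_norm_deriv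
  exact (mul_pos hc (dT_pos hx hy hxy)).trans_le
    (mul_dT_le_arcDist hγ.continuous_deriv hc.le hcγ x y)

end ArcDist

section ShorterArc

lemma abs_le_abs_add_int_mul {a L : ℝ} (h : 2 * |a| ≤ L) (k : ℤ) : |a| ≤ |a + k * L| := by
  rcases eq_or_ne k 0 with rfl | hk
  · simp
  have hL : 0 ≤ L := (by positivity : 0 ≤ 2 * |a|).trans h
  have hk1 : (1 : ℝ) ≤ |(k : ℝ)| := by exact_mod_cast Int.one_le_abs hk
  have htri := abs_sub (a + k * L) a
  rw [add_sub_cancel_left, abs_mul, abs_of_nonneg hL] at htri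
  nlinarith

lemma exists_forall_two_mul_abs_integral_le {w : ℝ → ℝ} (hw : Continuous w) (h0 : ∀ t, 0 ≤ w t)
    (hp : Function.Periodic w 1) (x : ℝ) :
    ∃ m, x ∈ Icc (m - 1) m ∧
      ∀ y ∈ Ioc (m - 1) m, 2 * |∫ t in x..y, w t| ≤ ∫ t in x..x + 1, w t := by
  have hint (a b : ℝ) : IntervalIntegrable w volume a b := hw.intervalIntegrable a b
  have nonneg {a b : ℝ} (hab : a ≤ b) : 0 ≤ ∫ t in a..b, w t :=
    intervalIntegral.integral_nonneg hab fun t _ => h0 t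
  set L := ∫ t in x..x + 1, w t
  have hL0 : 0 ≤ L := nonneg (by linarith)
  obtain ⟨m, hm, hmid⟩ := intermediate_value_Icc (by linarith : x ≤ x + 1)
    (intervalIntegral.continuous_primitive hint x).continuousOn
    (show L / 2 ∈ Icc (∫ t in x..x, w t) L by
      rw [intervalIntegral.integral_same]; constructor <;> linarith)
  have hperiod : ∫ t in (m - 1)..m, w t = L := by
    simpa only [sub_add_cancel] using hp.intervalIntegral_add_eq (m - 1) x
  refine ⟨m, ⟨by linarith [hm.2], hm.1⟩, fun y hy => ?_⟩
  have hxym := intervalIntegral.integral_add_adjacent_intervals (hint x y) (hint y m)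
  have hmym := intervalIntegral.integral_add_adjacent_intervals (hint (m - 1) y) (hint y m)
  have hleft := nonneg hy.1.le
  have hright := nonneg hy.2
  simp only at hmid
  rw [← abs_two, ← abs_mul, abs_le]
  constructor <;> linarith

variable {n : ℕ} {γ : ℝ → En n}

lemma IsC1Loop.arcDist_eq_abs_integral (hγ : IsC1Loop γ) {x y : ℝ}
    (h : 2 * |∫ t in x..y, ‖deriv γ t‖| ≤ ∫ t in x..x + 1, ‖deriv γ t‖) :
    arcDist γ x y = |∫ t in x..y, ‖deriv γ t‖| := by
  have hint (a b : ℝ) : IntervalIntegrable (fun t => ‖deriv γ t‖) volume a b :=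
    hγ.continuous_deriv.norm.intervalIntegrable a b
  refine le_antisymm (by simpa using arcDist_le γ x y 0) (le_ciInf fun k => ?_)
  have hwind := hγ.periodic_norm_deriv.intervalIntegral_add_zsmul_eq k y hint
  rw [zsmul_eq_mul, mul_one, zsmul_eq_mul,
    hγ.periodic_norm_deriv.intervalIntegral_add_eq y x] at hwind
  have hsplit := intervalIntegral.integral_add_adjacent_intervals (hint x y) (hint y (y + k))
  rw [← hsplit, hwind]
  exact abs_le_abs_add_int_mul h k

lemma IsC1Loop.exists_arcDist_eq_abs_integral (hγ : IsC1Loop γ) (x : ℝ) :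
    ∃ m, x ∈ Icc (m - 1) m ∧
      ∀ y ∈ Ioc (m - 1) m, arcDist γ x y = |∫ t in x..y, ‖deriv γ t‖| := by
  obtain ⟨m, hx, hm⟩ := exists_forall_two_mul_abs_integral_le hγ.continuous_deriv.norm
    (fun _ => norm_nonneg _) hγ.periodic_norm_deriv x
  exact ⟨m, hx, fun y hy => hγ.arcDist_eq_abs_integral (hm y hy)⟩

end ShorterArc

section Distortion

lemma exists_int_abs_add_sub_eq_dT (x y : ℝ) : ∃ k : ℤ, |y + k - x| = dT x y :=
  ⟨round (x - y), by
    rw [dT_eq_norm, UnitAddCircle.norm_eq, abs_sub_comm, add_comm, ← sub_sub, sub_right_comm]⟩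

lemma dT_le_half (x y : ℝ) : dT x y ≤ 1 / 2 := by
  rw [dT_eq_norm]
  simpa using AddCircle.norm_le_half_period (1 : ℝ) one_ne_zero (x := ((x - y : ℝ) : UnitAddCircle))

lemma dT_eq_abs_sub {x y : ℝ} (h : |x - y| ≤ 1 / 2) : dT x y = |x - y| := by
  rw [dT_eq_norm, AddCircle.norm_coe_eq_abs_iff (1 : ℝ) one_ne_zero, abs_one]
  exact h

variable {E : Type*} [NormedAddCommGroup E] [NormedSpace ℝ E] {γ : ℝ → E}

lemma IsC1Embedding.dT_eq_zero (hγ : IsC1Embedding γ) {x y : ℝ} (h : γ x = γ y) : dT x y = 0 := by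
  have map_fract (z : ℝ) : γ (Int.fract z) = γ z := by
    simpa using hγ.periodic.sub_int_mul_eq (x := z) ⌊z⌋
  obtain ⟨k, hk⟩ := Int.fract_eq_fract.1 (hγ.injOn ⟨Int.fract_nonneg x, Int.fract_lt_one x⟩
    ⟨Int.fract_nonneg y, Int.fract_lt_one y⟩ (by rw [map_fract, map_fract, h]))
  exact le_antisymm (by simpa [hk] using dT_le x y k) (dT_nonneg x y)

variable [CompleteSpace E]

lemma IsC1Loop.smul_integral_deriv (hγ : IsC1Loop γ) (x h : ℝ) :
    h • ∫ θ in (0 : ℝ)..1, deriv γ (x + h * θ) = γ (x + h) - γ x := by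
  rw [intervalIntegral.smul_integral_comp_add_mul, mul_zero, mul_one, add_zero, hγ.integral_deriv]

lemma IsC1Embedding.exists_mul_dT_le_norm_sub (hγ : IsC1Embedding γ) :
    ∃ c, 0 < c ∧ ∀ x ∈ I01, ∀ y, c * dT x y ≤ ‖γ y - γ x‖ := by
  set S : ℝ × ℝ → E := fun z => ∫ θ in (0 : ℝ)..1, deriv γ (z.1 + z.2 * θ) with hS
  have hderiv := hγ.continuous_deriv
  have hcont : Continuous S :=
    intervalIntegral.continuous_parametric_intervalIntegral_of_continuous'
      (f := fun (z : ℝ × ℝ) θ => deriv γ (z.1 + z.2 * θ))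
      (by simp only [Function.uncurry_def]; fun_prop) 0 1
  have hne (x h : ℝ) (hh : |h| ≤ 1 / 2) : S (x, h) ≠ 0 := by
    rcases eq_or_ne h 0 with rfl | h0
    · simp [hS, hγ.deriv_ne_zero]
    intro hSx
    have hchord := hγ.smul_integral_deriv x h
    rw [show ∫ θ in (0 : ℝ)..1, deriv γ (x + h * θ) = 0 from hSx, smul_zero, eq_comm,
      sub_eq_zero] at hchord
    have hdT := hγ.dT_eq_zero hchord
    rw [dT_eq_abs_sub (by simpa using hh), add_sub_cancel_left] at hdT
    exact h0 (abs_eq_zero.1 hdT)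
  obtain ⟨z, hz, hmin⟩ := (isCompact_Icc.prod isCompact_Icc).exists_isMinOn
    (s := Icc (0 : ℝ) 1 ×ˢ Icc (-(1 / 2) : ℝ) (1 / 2)) ⟨(0, 0), by simp⟩ hcont.norm.continuousOn
  refine ⟨‖S z‖, norm_pos_iff.2 (hne z.1 z.2 (abs_le.2 hz.2)), fun x hx y => ?_⟩
  obtain ⟨k, hk⟩ := exists_int_abs_add_sub_eq_dT x y
  have hmem : (x, y + k - x) ∈ Icc (0 : ℝ) 1 ×ˢ Icc (-(1 / 2) : ℝ) (1 / 2) :=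
    ⟨Ico_subset_Icc_self hx, abs_le.1 (hk.trans_le (dT_le_half x y))⟩
  have hshift : γ (x + (y + k - x)) = γ y := by
    simpa using hγ.periodic.int_mul k y
  rw [← hshift, ← hγ.smul_integral_deriv, norm_smul, Real.norm_eq_abs, hk, mul_comm]
  exact mul_le_mul_of_nonneg_left (hmin hmem) (dT_nonneg x y)

variable {n : ℕ} {γ : ℝ → En n}

lemma IsC1Embedding.distorE_lt_top (hγ : IsC1Embedding γ) : distorE γ < ⊤ := by
  obtain ⟨c, hc, hchord⟩ := hγ.exists_mul_dT_le_norm_sub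
  refine lt_of_le_of_lt (b := ENNReal.ofReal (supNorm (deriv γ) / c)) ?_ ENNReal.ofReal_lt_top
  refine iSup₂_le fun x hx => iSup₂_le fun y hy => iSup_le fun hxy => ENNReal.ofReal_le_ofReal ?_
  have hdT := dT_pos hx hy hxy
  calc arcDist γ x y / ‖γ y - γ x‖
      ≤ supNorm (deriv γ) * dT x y / (c * dT x y) :=
        div_le_div₀ (mul_nonneg (supNorm_nonneg _) hdT.le)
          (arcDist_le_mul_dT hγ.norm_deriv_le x y) (mul_pos hc hdT) (hchord x hx y)
    _ = supNorm (deriv γ) / c := mul_div_mul_right _ _ hdT.ne'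

lemma IsC1Embedding.arcDist_div_le_distor (hγ : IsC1Embedding γ) {x y : ℝ} (hx : x ∈ I01)
    (hy : y ∈ I01) (hxy : x ≠ y) : arcDist γ x y / ‖γ y - γ x‖ ≤ distor γ := by
  rw [distor, ← ENNReal.ofReal_le_iff_le_toReal hγ.distorE_lt_top.ne]
  exact le_iSup₂_of_le x hx (le_iSup₂_of_le y hy (le_iSup_of_le hxy le_rfl))

end Distortion

section ArcLengthDerivative

variable {n : ℕ} {γ u : ℝ → En n}

lemma continuous_Dg (hγ : IsC1Embedding γ) (hu : IsC1Loop u) : Continuous (Dg γ u) :=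
  (hγ.continuous_deriv.norm.inv₀ fun x => (hγ.norm_deriv_pos x).ne').smul hu.continuous_deriv

lemma periodic_Dg (hγ : IsC1Loop γ) (hu : IsC1Loop u) : Function.Periodic (Dg γ u) 1 := fun x => by
  rw [Dg, Dg, hγ.periodic_deriv, hu.periodic_deriv]

lemma norm_Dg_le_supNorm (hγ : IsC1Embedding γ) (hu : IsC1Loop u) (x : ℝ) :
    ‖Dg γ u x‖ ≤ supNorm (Dg γ u) :=
  norm_le_supNorm (continuous_Dg hγ hu) (periodic_Dg hγ.toIsC1Loop hu) x

lemma norm_Dg_self (hγ : IsC1Embedding γ) (x : ℝ) : ‖Dg γ γ x‖ = 1 :=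
  norm_smul_inv_norm (hγ.deriv_ne_zero x)

lemma norm_deriv_smul_Dg_sub (hγ : IsC1Embedding γ) (u : ℝ → En n) (x t : ℝ) :
    ‖deriv γ t‖ • (Dg γ u t - ⟪Dg γ γ x, Dg γ γ t⟫ • Dg γ u x) =
      deriv u t - DDg γ u x (deriv γ t) := by
  have ht := (hγ.norm_deriv_pos t).ne'
  have hx := (hγ.norm_deriv_pos x).ne'
  simp only [Dg, DDg, smul_sub, smul_smul, real_inner_smul_left, real_inner_smul_right,
    mul_inv_cancel₀ ht, one_smul]
  congr 2
  field_simp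

end ArcLengthDerivative

section TangentRemainder

variable {n : ℕ} {γ u : ℝ → En n}

/-- The numerator of `R^s_γ u`: the error made in predicting the increment of `u` along `γ` from
the chord of `γ` and the derivative of `u` at `x`. -/
def tangentRemainder (γ u : ℝ → En n) (x y : ℝ) : En n := u y - u x - DDg γ u x (γ y - γ x)

/-- The squared variation of `D_γ u` and of the unit tangent `D_γ γ` between `x` and `y`, the latter
weighted so that together they control the integrand representing `tangentRemainder`. -/
def dgVariation (γ u : ℝ → En n) (x y : ℝ) : ℝ :=
  ‖Dg γ u y - Dg γ u x‖ ^ 2 + supNorm (Dg γ u) ^ 2 * ‖Dg γ γ y - Dg γ γ x‖ ^ 2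

lemma continuous_dgVariation (hγ : IsC1Embedding γ) (hu : IsC1Loop u) (x : ℝ) :
    Continuous (dgVariation γ u x) := by
  have := continuous_Dg hγ hu
  have := continuous_Dg hγ hγ.toIsC1Loop
  unfold dgVariation
  fun_prop

lemma periodic_dgVariation (hγ : IsC1Loop γ) (hu : IsC1Loop u) (x : ℝ) :
    Function.Periodic (dgVariation γ u x) 1 := fun y => by
  rw [dgVariation, dgVariation, periodic_Dg hγ hu, periodic_Dg hγ hγ]

lemma periodic_tangentRemainder (hγ : IsC1Loop γ) (hu : IsC1Loop u) (x : ℝ) :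
    Function.Periodic (tangentRemainder γ u x) 1 := fun y => by
  rw [tangentRemainder, tangentRemainder, hγ.periodic, hu.periodic]

lemma tangentRemainder_eq_integral (hγ : IsC1Embedding γ) (hu : IsC1Loop u) (x y : ℝ) :
    tangentRemainder γ u x y =
      ∫ t in x..y, ‖deriv γ t‖ • (Dg γ u t - ⟪Dg γ γ x, Dg γ γ t⟫ • Dg γ u x) := by
  let T : En n →L[ℝ] En n :=
    (((‖deriv γ x‖ ^ 2)⁻¹) • innerSL ℝ (deriv γ x)).smulRight (deriv u x)
  have hT (w : En n) : DDg γ u x w = T w := rfl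
  have hγ' := hγ.continuous_deriv
  have hTγ' : IntervalIntegrable (fun t => T (deriv γ t)) volume x y :=
    (T.continuous.comp hγ').intervalIntegrable x y
  simp_rw [norm_deriv_smul_Dg_sub hγ u x, hT]
  rw [intervalIntegral.integral_sub (hu.continuous_deriv.intervalIntegrable x y) hTγ',
    T.intervalIntegral_comp_comm (hγ'.intervalIntegrable x y), hu.integral_deriv,
    hγ.integral_deriv, tangentRemainder, hT]

lemma norm_sub_inner_smul_sq_le {E : Type*} [NormedAddCommGroup E] [InnerProductSpace ℝ E]
    {a b τ τ' : E} {M : ℝ} (ha : ‖a‖ ≤ M) (hb : ‖b‖ ≤ M) (hτ : ‖τ‖ = 1) (hτ' : ‖τ'‖ = 1) :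
    ‖a - ⟪τ, τ'⟫ • b‖ ^ 2 ≤ ‖a - b‖ ^ 2 + M ^ 2 * ‖τ' - τ‖ ^ 2 := by
  set c : ℝ := ⟪τ, τ'⟫ with hc
  have hcabs : |c| ≤ 1 := by simpa [hτ, hτ'] using abs_real_inner_le_norm τ τ'
  obtain ⟨hc_lower, hc_upper⟩ := abs_le.1 hcabs
  have hab : ⟪a, b⟫ ≤ M ^ 2 :=
    (real_inner_le_norm a b).trans (by nlinarith [norm_nonneg a, norm_nonneg b])
  have hgap : (‖a - b‖ ^ 2 + M ^ 2 * ‖τ' - τ‖ ^ 2) - ‖a - c • b‖ ^ 2 =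
      (1 - c) * (2 * (M ^ 2 - ⟪a, b⟫) + (1 + c) * ‖b‖ ^ 2) := by
    rw [norm_sub_sq_real, norm_sub_sq_real, norm_sub_sq_real, hτ, hτ', real_inner_comm τ τ', ← hc,
      norm_smul, real_inner_smul_right, mul_pow, Real.norm_eq_abs, sq_abs]
    ring
  have hgap_nonneg : 0 ≤ (1 - c) * (2 * (M ^ 2 - ⟪a, b⟫) + (1 + c) * ‖b‖ ^ 2) :=
    mul_nonneg (by linarith) (add_nonneg (by linarith) (mul_nonneg (by linarith) (sq_nonneg _)))
  linarith

lemma setLIntegral_uIoc_ofReal {w : ℝ → ℝ} (hw : Continuous w) (h0 : ∀ t, 0 ≤ w t) (x y : ℝ) :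
    ∫⁻ t in uIoc x y, ENNReal.ofReal (w t) = ENNReal.ofReal |∫ t in x..y, w t| := by
  rw [← ofReal_integral_eq_lintegral_ofReal
      (hw.integrableOn_uIcc.mono_set uIoc_subset_uIcc) (ae_of_all _ h0),
    intervalIntegral.abs_intervalIntegral_eq, abs_of_nonneg (integral_nonneg h0)]

lemma enorm_tangentRemainder_sq_le (hγ : IsC1Embedding γ) (hu : IsC1Loop u) (x y : ℝ) :
    ‖tangentRemainder γ u x y‖ₑ ^ 2 ≤ ENNReal.ofReal |∫ t in x..y, ‖deriv γ t‖| *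
      ∫⁻ t in uIoc x y, ENNReal.ofReal (‖deriv γ t‖ * dgVariation γ u x t) := by
  have hDu := continuous_Dg hγ hu
  have hDγ := continuous_Dg hγ hγ.toIsC1Loop
  have hspeed := hγ.continuous_deriv.norm
  have hint : Continuous fun t => Dg γ u t - ⟪Dg γ γ x, Dg γ γ t⟫ • Dg γ u x := by fun_prop
  rw [tangentRemainder_eq_integral hγ hu, ← ofReal_norm, intervalIntegral.norm_intervalIntegral_eq,
    ofReal_norm, ← setLIntegral_uIoc_ofReal hspeed (fun _ => norm_nonneg _)]
  refine (enorm_integral_smul_sq_le hspeed.measurable (fun _ => norm_nonneg _)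
    hint.aestronglyMeasurable).trans ?_
  gcongr with t
  rw [enorm_sq_eq_ofReal, ← ENNReal.ofReal_mul (norm_nonneg _)]
  gcongr
  exact norm_sub_inner_smul_sq_le (norm_Dg_le_supNorm hγ hu t) (norm_Dg_le_supNorm hγ hu x)
    (norm_Dg_self hγ x) (norm_Dg_self hγ t)

lemma norm_Rop_sq_le (hγ : IsC1Embedding γ) (u : ℝ → En n) {s : ℝ} (hs : 0 ≤ s) {x y : ℝ}
    (hx : x ∈ I01) (hy : y ∈ I01) :
    ‖Rop s γ u x y‖ ^ 2 ≤
      distor γ ^ (2 * s) * (‖tangentRemainder γ u x y‖ ^ 2 / arcDist γ x y ^ (2 * s)) := by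
  have hdistor : 0 ≤ distor γ := ENNReal.toReal_nonneg
  rcases eq_or_ne x y with rfl | hxy
  · simp [Rop, DDg, tangentRemainder]
  have harc := hγ.arcDist_pos hx hy hxy
  have hchord : 0 < ‖γ y - γ x‖ :=
    norm_pos_iff.2 (sub_ne_zero.2 fun h => hxy (hγ.injOn hx hy h.symm))
  have hratio : (‖γ y - γ x‖ ^ (2 * s))⁻¹ ≤ distor γ ^ (2 * s) / arcDist γ x y ^ (2 * s) := by
    rw [← div_rpow hdistor harc.le, ← inv_rpow hchord.le]
    refine rpow_le_rpow (by positivity) ?_ (by positivity)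
    rw [inv_eq_one_div, div_le_div_iff₀ hchord harc, one_mul]
    exact (div_le_iff₀ hchord).1 (hγ.arcDist_div_le_distor hx hy hxy)
  calc ‖Rop s γ u x y‖ ^ 2
      = (‖γ y - γ x‖ ^ (2 * s))⁻¹ * ‖tangentRemainder γ u x y‖ ^ 2 := by
        rw [Rop, ← tangentRemainder, norm_smul, mul_pow, norm_inv, Real.norm_of_nonneg
          (rpow_nonneg hchord.le s), inv_pow, ← rpow_mul_natCast hchord.le, Nat.cast_ofNat,
          mul_comm s]
    _ ≤ distor γ ^ (2 * s) / arcDist γ x y ^ (2 * s) * ‖tangentRemainder γ u x y‖ ^ 2 := by gcongr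
    _ = distor γ ^ (2 * s) * (‖tangentRemainder γ u x y‖ ^ 2 / arcDist γ x y ^ (2 * s)) := by ring

end TangentRemainder

section EnergyBound

variable {n : ℕ} {γ u : ℝ → En n} {s x y : ℝ}

lemma nuW_nonneg (γ : ℝ → En n) (x y : ℝ) : 0 ≤ nuW γ x y :=
  div_nonneg (by positivity) (arcDist_nonneg γ x y)

lemma periodic_nuW (hγ : IsC1Loop γ) (x : ℝ) : Function.Periodic (nuW γ x) 1 := fun y => by
  rw [nuW, nuW, hγ.periodic_deriv, periodic_arcDist]

lemma measurable_nuW (hγ : IsC1Loop γ) : Measurable fun z : ℝ × ℝ => nuW γ z.1 z.2 := by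
  have hγ' := hγ.continuous_deriv
  have hspeed : Continuous fun z : ℝ × ℝ => ‖deriv γ z.1‖ * ‖deriv γ z.2‖ := by fun_prop
  exact hspeed.measurable.div (measurable_arcDist hγ')

lemma ofReal_tangentRemainder_sq_mul_nuW_le (hγ : IsC1Embedding γ) (hu : IsC1Loop u)
    (harc : arcDist γ x y = |∫ t in x..y, ‖deriv γ t‖|) :
    ENNReal.ofReal (‖tangentRemainder γ u x y‖ ^ 2 / arcDist γ x y ^ (2 * s) * nuW γ x y) ≤
      ENNReal.ofReal ‖deriv γ x‖ *
        (ENNReal.ofReal (‖deriv γ y‖ / |∫ t in x..y, ‖deriv γ t‖| ^ (2 * s)) *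
          ∫⁻ t in uIoc x y, ENNReal.ofReal (‖deriv γ t‖ * dgVariation γ u x t)) := by
  have hbound := enorm_tangentRemainder_sq_le hγ hu x y
  rw [nuW, harc]
  set d := |∫ t in x..y, ‖deriv γ t‖|
  set J := ∫⁻ t in uIoc x y, ENNReal.ofReal (‖deriv γ t‖ * dgVariation γ u x t)
  rcases (show 0 ≤ d from abs_nonneg _).eq_or_lt with hd | hd
  · simp [← hd]
  calc ENNReal.ofReal (‖tangentRemainder γ u x y‖ ^ 2 / d ^ (2 * s) *
          (‖deriv γ x‖ * ‖deriv γ y‖ / d))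
      = ENNReal.ofReal (‖deriv γ x‖ * (‖deriv γ y‖ / d ^ (2 * s) *
          (d⁻¹ * ‖tangentRemainder γ u x y‖ ^ 2))) := by congr 1; ring
    _ = ENNReal.ofReal ‖deriv γ x‖ * (ENNReal.ofReal (‖deriv γ y‖ / d ^ (2 * s)) *
          (ENNReal.ofReal d⁻¹ * ‖tangentRemainder γ u x y‖ₑ ^ 2)) := by
        rw [ENNReal.ofReal_mul (by positivity), ENNReal.ofReal_mul (by positivity),
          ENNReal.ofReal_mul (by positivity), enorm_sq_eq_ofReal]
    _ ≤ ENNReal.ofReal ‖deriv γ x‖ * (ENNReal.ofReal (‖deriv γ y‖ / d ^ (2 * s)) *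
          (ENNReal.ofReal d⁻¹ * (ENNReal.ofReal d * J))) := by gcongr
    _ = ENNReal.ofReal ‖deriv γ x‖ * (ENNReal.ofReal (‖deriv γ y‖ / d ^ (2 * s)) * J) := by
        rw [← mul_assoc (ENNReal.ofReal d⁻¹), ← ENNReal.ofReal_mul (by positivity),
          inv_mul_cancel₀ hd.ne', ENNReal.ofReal_one, one_mul]

lemma ofReal_dgVariation_mul_nuW (hs : 1 / 2 < s)
    (harc : arcDist γ x y = |∫ t in x..y, ‖deriv γ t‖|) :
    ENNReal.ofReal (dgVariation γ u x y / arcDist γ x y ^ (2 * (s - 1)) * nuW γ x y) =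
      ENNReal.ofReal ‖deriv γ x‖ *
        (ENNReal.ofReal (1 / |∫ t in x..y, ‖deriv γ t‖| ^ (2 * s - 1)) *
          ENNReal.ofReal (‖deriv γ y‖ * dgVariation γ u x y)) := by
  rw [nuW, harc, div_mul_div_comm, ← rpow_add_one' (abs_nonneg _) (by linarith),
    show 2 * (s - 1) + 1 = 2 * s - 1 by ring, ← ENNReal.ofReal_mul (by positivity),
    ← ENNReal.ofReal_mul (norm_nonneg _)]
  congr 1
  ring

lemma setLIntegral_tangentRemainder_le (hs : 1 / 2 < s) (hγ : IsC1Embedding γ) (hu : IsC1Loop u)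
    (x : ℝ) :
    ∫⁻ y in I01,
        ENNReal.ofReal (‖tangentRemainder γ u x y‖ ^ 2 / arcDist γ x y ^ (2 * s) * nuW γ x y) ≤
      ENNReal.ofReal (1 / (2 * s - 1)) * ∫⁻ y in I01,
        ENNReal.ofReal (dgVariation γ u x y / arcDist γ x y ^ (2 * (s - 1)) * nuW γ x y) := by
  have hγ₀ := hγ.toIsC1Loop
  have hspeed := hγ.continuous_deriv.norm
  have hV := continuous_dgVariation hγ hu x
  obtain ⟨m, hxm, harc⟩ := hγ₀.exists_arcDist_eq_abs_integral x
  rw [setLIntegral_I01_of_periodic (fun y => by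
      rw [periodic_tangentRemainder hγ₀ hu, periodic_arcDist, periodic_nuW hγ₀]) (m - 1),
    setLIntegral_I01_of_periodic (fun y => by
      rw [periodic_dgVariation hγ₀ hu, periodic_arcDist, periodic_nuW hγ₀]) (m - 1),
    sub_add_cancel, setLIntegral_congr_fun measurableSet_Ioc
      fun y hy => ofReal_dgVariation_mul_nuW hs (harc y hy),
    lintegral_const_mul' _ _ ENNReal.ofReal_ne_top, mul_left_comm]
  refine (setLIntegral_mono' measurableSet_Ioc fun y hy =>
    ofReal_tangentRemainder_sq_mul_nuW_le hγ hu (harc y hy)).trans ?_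
  rw [lintegral_const_mul' _ _ ENNReal.ofReal_ne_top]
  gcongr
  exact hardy_Ioc hspeed hγ.norm_deriv_pos (by fun_prop) (by linarith) hxm

/-- The integrand of the intrinsic seminorm `gagGammaSqE`. -/
def gagGammaKernel (s : ℝ) (γ u : ℝ → En n) (x y : ℝ) : ℝ≥0∞ :=
  ENNReal.ofReal (‖Dg γ u y - Dg γ u x‖ ^ 2 / arcDist γ x y ^ (2 * (s - 1)) * nuW γ x y)

lemma measurable_gagGammaKernel (hγ : IsC1Embedding γ) (hu : IsC1Loop u) :
    Measurable (Function.uncurry (gagGammaKernel s γ u)) := by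
  have hDu := continuous_Dg hγ hu
  have hdiff : Continuous fun z : ℝ × ℝ => ‖Dg γ u z.2 - Dg γ u z.1‖ ^ 2 := by fun_prop
  exact ((hdiff.measurable.div ((measurable_arcDist hγ.continuous_deriv).pow_const _)).mul
    (measurable_nuW hγ.toIsC1Loop)).ennreal_ofReal

lemma lintegral_dgVariation_eq (s : ℝ) (hγ : IsC1Embedding γ) (hu : IsC1Loop u) :
    ∫⁻ x in I01, ∫⁻ y in I01,
        ENNReal.ofReal (dgVariation γ u x y / arcDist γ x y ^ (2 * (s - 1)) * nuW γ x y) =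
      gagGammaSqE s γ u + ENNReal.ofReal (supNorm (Dg γ u) ^ 2) * gagGammaSqE s γ γ := by
  refine Eq.trans ?_ (lintegral_lintegral_add_const_mul (g := gagGammaKernel s γ γ)
    (measurable_gagGammaKernel hγ hu) ENNReal.ofReal_ne_top)
  refine lintegral_congr fun x => lintegral_congr fun y => ?_
  have hnu := nuW_nonneg γ x y
  have harc := arcDist_nonneg γ x y
  rw [gagGammaKernel, gagGammaKernel, ← ENNReal.ofReal_mul (by positivity),
    ← ENNReal.ofReal_add (by positivity) (by positivity), dgVariation]
  congr 1
  ring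

lemma RnuSqE_le (hs : 1 / 2 < s) (hγ : IsC1Embedding γ) (hu : IsC1Loop u) :
    RnuSqE s γ u ≤ ENNReal.ofReal (distor γ ^ (2 * s)) * (ENNReal.ofReal (1 / (2 * s - 1)) *
      (gagGammaSqE s γ u + ENNReal.ofReal (supNorm (Dg γ u) ^ 2) * gagGammaSqE s γ γ)) := by
  have hdistor : 0 ≤ distor γ ^ (2 * s) := rpow_nonneg ENNReal.toReal_nonneg _
  rw [← lintegral_dgVariation_eq s hγ hu]
  calc RnuSqE s γ u
      ≤ ∫⁻ x in I01, ∫⁻ y in I01, ENNReal.ofReal (distor γ ^ (2 * s)) *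
          ENNReal.ofReal (‖tangentRemainder γ u x y‖ ^ 2 / arcDist γ x y ^ (2 * s) *
            nuW γ x y) := by
        refine setLIntegral_setLIntegral_mono measurableSet_I01 measurableSet_I01
          fun x hx y hy => ?_
        rw [← ENNReal.ofReal_mul hdistor, ← mul_assoc]
        exact ENNReal.ofReal_le_ofReal (mul_le_mul_of_nonneg_right
          (norm_Rop_sq_le hγ u (by linarith) hx hy) (nuW_nonneg γ x y))
    _ = ENNReal.ofReal (distor γ ^ (2 * s)) * ∫⁻ x in I01, ∫⁻ y in I01,
          ENNReal.ofReal (‖tangentRemainder γ u x y‖ ^ 2 / arcDist γ x y ^ (2 * s) *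
            nuW γ x y) := lintegral_lintegral_const_mul ENNReal.ofReal_ne_top
    _ ≤ ENNReal.ofReal (distor γ ^ (2 * s)) * (ENNReal.ofReal (1 / (2 * s - 1)) *
          ∫⁻ x in I01, ∫⁻ y in I01, ENNReal.ofReal
            (dgVariation γ u x y / arcDist γ x y ^ (2 * (s - 1)) * nuW γ x y)) := by
        gcongr
        rw [← lintegral_const_mul' _ _ ENNReal.ofReal_ne_top]
        exact lintegral_mono (setLIntegral_tangentRemainder_le hs hγ hu)

end EnergyBound

section SeminormComparison

variable {n : ℕ} {γ u : ℝ → En n} {s c : ℝ}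

lemma norm_Dg_le (hc : 0 < c) (h : ∀ t, c ≤ ‖deriv γ t‖) (hu : IsC1Loop u) (x : ℝ) :
    ‖Dg γ u x‖ ≤ c⁻¹ * supNorm (deriv u) := by
  rw [Dg, norm_smul, norm_inv, norm_norm]
  gcongr
  exacts [h x, hu.norm_deriv_le x]

lemma supNorm_Dg_le (hc : 0 < c) (h : ∀ t, c ≤ ‖deriv γ t‖) (hu : IsC1Loop u) :
    supNorm (Dg γ u) ≤ c⁻¹ * supNorm (deriv u) :=
  ciSup_le (norm_Dg_le hc h hu)

lemma norm_Dg_sub_le (hc : 0 < c) (h : ∀ t, c ≤ ‖deriv γ t‖) (hu : IsC1Loop u) (x y : ℝ) :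
    ‖Dg γ u y - Dg γ u x‖ ≤ c⁻¹ * ‖deriv u y - deriv u x‖ +
      c⁻¹ ^ 2 * (supNorm (deriv u) * ‖deriv γ y - deriv γ x‖) := by
  have hpos (t : ℝ) : 0 < ‖deriv γ t‖ := hc.trans_le (h t)
  have hsplit : Dg γ u y - Dg γ u x = ‖deriv γ y‖⁻¹ • (deriv u y - deriv u x) +
      (‖deriv γ y‖⁻¹ * (‖deriv γ x‖ - ‖deriv γ y‖)) • Dg γ u x := by
    have hx := (hpos x).ne'
    have hy := (hpos y).ne'
    simp only [Dg]
    match_scalars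
    all_goals field_simp
    ring
  rw [hsplit]
  refine (norm_add_le _ _).trans ?_
  rw [norm_smul, norm_smul, norm_mul, norm_inv, norm_norm, pow_two, Real.norm_eq_abs]
  calc ‖deriv γ y‖⁻¹ * ‖deriv u y - deriv u x‖ +
        ‖deriv γ y‖⁻¹ * |‖deriv γ x‖ - ‖deriv γ y‖| * ‖Dg γ u x‖
      ≤ c⁻¹ * ‖deriv u y - deriv u x‖ +
        c⁻¹ * ‖deriv γ y - deriv γ x‖ * (c⁻¹ * supNorm (deriv u)) := by
        gcongr
        exacts [h y, h y, (abs_norm_sub_norm_le _ _).trans_eq (norm_sub_rev _ _),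
          norm_Dg_le hc h hu x]
    _ = _ := by ring

lemma norm_Dg_sub_sq_le (hc : 0 < c) (h : ∀ t, c ≤ ‖deriv γ t‖) (hu : IsC1Loop u) (x y : ℝ) :
    ‖Dg γ u y - Dg γ u x‖ ^ 2 ≤ 2 * (c⁻¹ ^ 2 + c⁻¹ ^ 4) * (‖deriv u y - deriv u x‖ ^ 2 +
      supNorm (deriv u) ^ 2 * ‖deriv γ y - deriv γ x‖ ^ 2) := by
  set A := ‖deriv u y - deriv u x‖
  set B := supNorm (deriv u) * ‖deriv γ y - deriv γ x‖ with hB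
  have hcross : 0 ≤ c⁻¹ ^ 4 * A ^ 2 + c⁻¹ ^ 2 * B ^ 2 := by positivity
  calc ‖Dg γ u y - Dg γ u x‖ ^ 2 ≤ (c⁻¹ * A + c⁻¹ ^ 2 * B) ^ 2 := by
        gcongr
        exact norm_Dg_sub_le hc h hu x y
    _ ≤ 2 * ((c⁻¹ * A) ^ 2 + (c⁻¹ ^ 2 * B) ^ 2) := add_sq_le
    _ ≤ 2 * (c⁻¹ ^ 2 + c⁻¹ ^ 4) * (A ^ 2 + B ^ 2) := by linarith
    _ = _ := by rw [hB, mul_pow]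

lemma gagGammaKernel_le (hs : 1 / 2 < s) (hγ : IsC1Loop γ) (hc : 0 < c)
    (h : ∀ t, c ≤ ‖deriv γ t‖) (hu : IsC1Loop u) {x y : ℝ} (hx : x ∈ I01) (hy : y ∈ I01) :
    gagGammaKernel s γ u x y ≤
      ENNReal.ofReal (2 * (c⁻¹ ^ 2 + c⁻¹ ^ 4) * supNorm (deriv γ) ^ 2 / c ^ (2 * (s - 1) + 1)) *
        (gagliardoKernel (s - 1) (deriv u) x y +
          ENNReal.ofReal (supNorm (deriv u) ^ 2) * gagliardoKernel (s - 1) (deriv γ) x y) := by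
  rcases eq_or_ne x y with rfl | hxy
  · simp [gagGammaKernel]
  have hd := dT_pos hx hy hxy
  have hpow : c ^ (2 * (s - 1) + 1) * dT x y ^ (2 * (s - 1) + 1) ≤
      arcDist γ x y ^ (2 * (s - 1) + 1) := by
    rw [← mul_rpow hc.le hd.le]
    exact rpow_le_rpow (by positivity) (mul_dT_le_arcDist hγ.continuous_deriv hc.le h x y)
      (by linarith)
  have hspeed := supNorm_nonneg (deriv γ)
  rw [gagliardoKernel, gagliardoKernel, ← ENNReal.ofReal_mul (by positivity),
    ← ENNReal.ofReal_add (by positivity) (by positivity), ← ENNReal.ofReal_mul (by positivity),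
    gagGammaKernel, nuW, div_mul_div_comm, ← rpow_add_one' (arcDist_nonneg _ _ _) (by linarith)]
  refine ENNReal.ofReal_le_ofReal ?_
  calc ‖Dg γ u y - Dg γ u x‖ ^ 2 * (‖deriv γ x‖ * ‖deriv γ y‖) /
        arcDist γ x y ^ (2 * (s - 1) + 1)
      ≤ 2 * (c⁻¹ ^ 2 + c⁻¹ ^ 4) * (‖deriv u y - deriv u x‖ ^ 2 +
          supNorm (deriv u) ^ 2 * ‖deriv γ y - deriv γ x‖ ^ 2) *
          (supNorm (deriv γ) * supNorm (deriv γ)) /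
            (c ^ (2 * (s - 1) + 1) * dT x y ^ (2 * (s - 1) + 1)) := by
        gcongr
        exacts [norm_Dg_sub_sq_le hc h hu x y, hγ.norm_deriv_le x,
          hγ.norm_deriv_le y]
    _ = _ := by field_simp

lemma exists_gagGammaSqE_le (hs : 1 / 2 < s) (hγ : IsC1Embedding γ) :
    ∃ C : ℝ, 0 ≤ C ∧ ∀ u, IsC1Loop u → gagGammaSqE s γ u ≤ ENNReal.ofReal C *
      (gagliardoSqE (s - 1) (deriv u) +
        ENNReal.ofReal (supNorm (deriv u) ^ 2) * gagliardoSqE (s - 1) (deriv γ)) := by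
  obtain ⟨c, hc, h⟩ := hγ.exists_pos_le_norm_deriv
  refine ⟨2 * (c⁻¹ ^ 2 + c⁻¹ ^ 4) * supNorm (deriv γ) ^ 2 / c ^ (2 * (s - 1) + 1), by positivity,
    fun u hu => (setLIntegral_setLIntegral_mono measurableSet_I01 measurableSet_I01
      fun x hx y hy => gagGammaKernel_le hs hγ.toIsC1Loop hc h hu hx hy).trans_eq ?_⟩
  rw [lintegral_lintegral_const_mul ENNReal.ofReal_ne_top, lintegral_lintegral_add_const_mul
    (measurable_gagliardoKernel hu.continuous_deriv) ENNReal.ofReal_ne_top]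
  rfl

end SeminormComparison

section Boundedness

variable {n : ℕ} {γ u : ℝ → En n} {s : ℝ}

lemma InHs.isC1Loop (hu : InHs s u) : IsC1Loop u := ⟨hu.1, hu.2.1⟩

lemma InHs.gagliardoSqE_ne_top (hu : InHs s u) : gagliardoSqE (s - 1) (deriv u) ≠ ⊤ := hu.2.2.ne

lemma InM.inHs (hγ : InM s γ) : InHs s γ := hγ.1

lemma InM.isC1Embedding (hγ : InM s γ) : IsC1Embedding γ :=
  ⟨hγ.inHs.isC1Loop, hγ.2.1, hγ.2.2⟩

lemma integral_add_gagliardoSqE_le_HsNormSq (s : ℝ) (u : ℝ → En n) :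
    (∫ x in I01, ‖deriv u x‖ ^ 2) + (gagliardoSqE (s - 1) (deriv u)).toReal ≤ HsNormSq s u := by
  have hL2 : 0 ≤ ∫ x in I01, ‖u x‖ ^ 2 := integral_nonneg fun _ => sq_nonneg _
  rw [HsNormSq]
  linarith

lemma distor_nonneg (γ : ℝ → En n) : 0 ≤ distor γ := ENNReal.toReal_nonneg

lemma gagGammaSq_nonneg (s : ℝ) (γ u : ℝ → En n) : 0 ≤ gagGammaSq s γ u := ENNReal.toReal_nonneg

lemma exists_supNorm_deriv_sq_le (n : ℕ) (hs : 3 / 2 < s) :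
    ∃ C : ℝ, 0 ≤ C ∧ ∀ u : ℝ → En n, InHs s u → supNorm (deriv u) ^ 2 ≤ C * HsNormSq s u := by
  obtain ⟨C, hC, hMorrey⟩ :=
    exists_supNorm_sq_le_mul_gagliardoSqE (En n) (show 1 / 2 < s - 1 by linarith)
  exact ⟨C, hC, fun u hu => (hMorrey _ hu.isC1Loop.continuous_deriv hu.isC1Loop.periodic_deriv
    hu.gagliardoSqE_ne_top).trans (by gcongr; exact integral_add_gagliardoSqE_le_HsNormSq s u)⟩

lemma exists_gagGammaSq_le (hs : 1 / 2 < s) (hγ : InM s γ) :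
    ∃ C : ℝ, 0 ≤ C ∧ ∀ u, InHs s u → gagGammaSqE s γ u ≠ ⊤ ∧ gagGammaSq s γ u ≤
      C * ((gagliardoSqE (s - 1) (deriv u)).toReal +
        supNorm (deriv u) ^ 2 * (gagliardoSqE (s - 1) (deriv γ)).toReal) := by
  obtain ⟨C, hC, hle⟩ := exists_gagGammaSqE_le hs hγ.isC1Embedding
  refine ⟨C, hC, fun u hu => ?_⟩
  have h := hle u hu.isC1Loop
  rw [← ENNReal.ofReal_toReal hu.gagliardoSqE_ne_top,
    ← ENNReal.ofReal_toReal hγ.inHs.gagliardoSqE_ne_top, ← ENNReal.ofReal_mul (by positivity),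
    ← ENNReal.ofReal_add (by positivity) (by positivity), ← ENNReal.ofReal_mul hC] at h
  exact ⟨ne_top_of_le_ne_top ENNReal.ofReal_ne_top h,
    ENNReal.toReal_le_of_le_ofReal (by positivity) h⟩

lemma RnuSq_le (hs : 1 / 2 < s) (hγ : InM s γ) (hu : InHs s u) :
    RnuSq s γ u ≤ 1 / (2 * s - 1) * distor γ ^ (2 * s) *
      (gagGammaSq s γ u + supNorm (Dg γ u) ^ 2 * gagGammaSq s γ γ) := by
  have hs' : 0 ≤ 1 / (2 * s - 1) := one_div_nonneg.2 (by linarith)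
  have hdistor := distor_nonneg γ
  have hu_nonneg := gagGammaSq_nonneg s γ u
  have hγ_nonneg := gagGammaSq_nonneg s γ γ
  obtain ⟨_, _, hfinite⟩ := exists_gagGammaSq_le hs hγ
  have h := RnuSqE_le hs hγ.isC1Embedding hu.isC1Loop
  rw [← ENNReal.ofReal_toReal (hfinite u hu).1, ← ENNReal.ofReal_toReal (hfinite γ hγ.inHs).1,
    ← gagGammaSq, ← gagGammaSq, ← ENNReal.ofReal_mul (by positivity),
    ← ENNReal.ofReal_add hu_nonneg (by positivity), ← ENNReal.ofReal_mul hs',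
    ← ENNReal.ofReal_mul (by positivity)] at h
  exact (ENNReal.toReal_le_of_le_ofReal (by positivity) h).trans_eq (by ring)

lemma exists_RnuSq_le_mul_HsNormSq (hs : 3 / 2 < s) (hγ : InM s γ) :
    ∃ K : ℝ, 0 ≤ K ∧ ∀ u, InHs s u → RnuSq s γ u ≤ K * HsNormSq s u := by
  obtain ⟨c, hc, hcγ⟩ := hγ.isC1Embedding.exists_pos_le_norm_deriv
  obtain ⟨Cm, hCm, hMorrey⟩ := exists_supNorm_deriv_sq_le n hs
  obtain ⟨Cg, hCg, hgag⟩ := exists_gagGammaSq_le (by linarith) hγ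
  set Gγ := (gagliardoSqE (s - 1) (deriv γ)).toReal
  have hGγ : 0 ≤ Gγ := ENNReal.toReal_nonneg
  have hdistor := distor_nonneg γ
  have hγ_nonneg := gagGammaSq_nonneg s γ γ
  have hs' : 0 ≤ 1 / (2 * s - 1) := one_div_nonneg.2 (by linarith)
  refine ⟨1 / (2 * s - 1) * distor γ ^ (2 * s) *
    (Cg * (1 + Cm * Gγ) + c⁻¹ ^ 2 * Cm * gagGammaSq s γ γ), by positivity, fun u hu => ?_⟩
  set H := HsNormSq s u
  have hG : (gagliardoSqE (s - 1) (deriv u)).toReal ≤ H :=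
    (le_add_of_nonneg_left (integral_nonneg fun _ => sq_nonneg _)).trans
      (integral_add_gagliardoSqE_le_HsNormSq s u)
  have hgagH : gagGammaSq s γ u ≤ Cg * (H + Cm * H * Gγ) :=
    (hgag u hu).2.trans (by gcongr; exact hMorrey u hu)
  have hDgH : supNorm (Dg γ u) ^ 2 ≤ c⁻¹ ^ 2 * (Cm * H) :=
    calc supNorm (Dg γ u) ^ 2 ≤ (c⁻¹ * supNorm (deriv u)) ^ 2 :=
          pow_le_pow_left₀ (supNorm_nonneg _) (supNorm_Dg_le hc hcγ hu.isC1Loop) 2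
      _ = c⁻¹ ^ 2 * supNorm (deriv u) ^ 2 := mul_pow _ _ _
      _ ≤ c⁻¹ ^ 2 * (Cm * H) := by gcongr; exact hMorrey u hu
  calc RnuSq s γ u
      ≤ 1 / (2 * s - 1) * distor γ ^ (2 * s) *
          (gagGammaSq s γ u + supNorm (Dg γ u) ^ 2 * gagGammaSq s γ γ) :=
        RnuSq_le (by linarith) hγ hu
    _ ≤ 1 / (2 * s - 1) * distor γ ^ (2 * s) *
          (Cg * (H + Cm * H * Gγ) + c⁻¹ ^ 2 * (Cm * H) * gagGammaSq s γ γ) := by gcongr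
    _ = _ := by ring

end Boundedness

theorem statement5_general {s : ℝ} (hs : 1 / 2 < s) {n : ℕ} {γ : ℝ → En n} (hγ : InM s γ) :
    (∀ u : ℝ → En n, InHs s u →
      RnuSq s γ u ≤ 1 / (2 * s - 1) * distor γ ^ (2 * s) *
        (gagGammaSq s γ u + supNorm (Dg γ u) ^ 2 * gagGammaSq s γ γ)) ∧
    (3 / 2 < s → ∃ C : ℝ, 0 ≤ C ∧ ∀ u : ℝ → En n, InHs s u →
      Real.sqrt (RnuSq s γ u) ≤ C * HsNorm s u) := by
  refine ⟨fun u hu => RnuSq_le hs hγ hu, fun hs' => ?_⟩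
  obtain ⟨K, hK, hbound⟩ := exists_RnuSq_le_mul_HsNormSq hs' hγ
  refine ⟨√K, sqrt_nonneg K, fun u hu => ?_⟩
  rw [HsNorm, ← sqrt_mul hK]
  exact sqrt_le_sqrt (hbound u hu)

/-- boundedness of `R^s_γ`: for `s ∈ (3/2,2)`, every `γ ∈ 𝓜` and every
`u ∈ H^s(𝕋,ℝⁿ)` satisfy
`‖R^s_γ u‖²_{L²(ν_γ)} ≤ (1/s)·distor(γ)^{2s}·([u]²_{H^s(γ)} + ‖D_γu‖²_{L∞}·[γ]²_{H^s(γ)})`;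
in particular `R^s_γ` is a bounded linear operator from `H^s` to `L²(ν_γ)`. -/
theorem statement5 (s : ℝ) (hs : s ∈ Set.Ioo (3 / 2 : ℝ) 2) (n : ℕ) (hn : 2 ≤ n)
    (γ : ℝ → En n) (hγ : InM s γ) :
    (∀ u : ℝ → En n, InHs s u →
      RnuSq s γ u ≤ (1 / s) * distor γ ^ (2 * s) *
        (gagGammaSq s γ u + supNorm (Dg γ u) ^ 2 * gagGammaSq s γ γ)) ∧
    ∃ C : ℝ, 0 ≤ C ∧ ∀ u : ℝ → En n, InHs s u →
      Real.sqrt (RnuSq s γ u) ≤ C * HsNorm s u := by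
  obtain ⟨henergy, hbounded⟩ := statement5_general (by linarith [hs.1] : 1 / 2 < s) hγ
  refine ⟨fun u hu => (henergy u hu).trans ?_, hbounded hs.1⟩
  have hdistor := distor_nonneg γ
  have hu_nonneg := gagGammaSq_nonneg s γ u
  have hγ_nonneg := gagGammaSq_nonneg s γ γ
  gcongr
  all_goals linarith [hs.1]
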